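/- arXiv:1409.3634 — 7 statements merged into one kernel-verified Lean document; each statement's English description precedes it below -/
import Mathlib

section
/- Let n and k be integers with 2 ≤ k ≤ n/2 and let τ > 0. Then the Kneser graph K(n,k) is ((1+τ)·(k/n), τ/(1+τ))-supersaturated; that is, every set S of vertices of K(n,k) with |S| ≥ (1+τ)·(k/n)·C(n,k) satisfies e(S) ≥ (τ/(1+τ)) · (|S|/C(n,k))² · e(K(n,k)). -/
open MeasureTheory Filter Finset

noncomputable section

/-- The binomial random subset measure on `V → Bool`: each coordinate is `true`
independently with probability `p`. -/
def bernMeasure (V : Type*) [Fintype V] (p : ℝ) : Measure (V → Bool) :=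
  Measure.pi fun _ => (PMF.bernoulli (min (Real.toNNReal p) 1) (min_le_right _ _)).toMeasure

/-- Vertices of the Kneser graph: `k`-element subsets of `[n]`. -/
abbrev KVert (n k : ℕ) := {A : Finset (Fin n) // A.card = k}

/-- The Kneser graph `K(n,k)`. -/
def kneser (n k : ℕ) : SimpleGraph (KVert n k) where
  Adj A B := A ≠ B ∧ Disjoint A.1 B.1
  symm := ⟨fun A B h => ⟨h.1.symm, h.2.symm⟩⟩
  loopless := ⟨fun A h => h.1 rfl⟩

/-- Total number of edges of a graph. -/
def eTotal {V : Type*} [Fintype V] (G : SimpleGraph V) : ℕ := Nat.card G.edgeSet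

/-- Number of edges of `G` with both endpoints in `S`. -/
def eCount {V : Type*} [Fintype V] (G : SimpleGraph V) (S : Finset V) : ℕ :=
  Nat.card (G.induce (S : Set V)).edgeSet

/-- `S` is an independent set of `G`. -/
def IsIndep {V : Type*} (G : SimpleGraph V) (S : Finset V) : Prop :=
  ∀ a ∈ S, ∀ b ∈ S, ¬ G.Adj a b

/-- Independence number of the subgraph of `G` induced on `{v | ω v = true}`. -/
def alphaSub {V : Type*} [Fintype V] (G : SimpleGraph V) (ω : V → Bool) : ℕ :=
  sSup {m | ∃ S : Finset V, (∀ v ∈ S, ω v = true) ∧ IsIndep G S ∧ S.card = m}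

/-- The size of a largest intersecting subfamily of the random hypergraph
determined by `ω`. -/
def maxIntersecting (n k : ℕ) (ω : KVert n k → Bool) : ℕ :=
  sSup {m | ∃ F : Finset (KVert n k), (∀ A ∈ F, ω A = true) ∧
    (∀ A ∈ F, ∀ B ∈ F, (A.1 ∩ B.1).Nonempty) ∧ F.card = m}

/-- `(λ,γ)`-supersaturation. -/
def Supersaturated {V : Type*} [Fintype V] (G : SimpleGraph V) (lam gam : ℝ) : Prop :=
  ∀ S : Finset V, lam * Fintype.card V ≤ S.card →
    gam * ((S.card : ℝ) / Fintype.card V) ^ 2 * eTotal G ≤ eCount G S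

/-- `(λ,B)`-stability with respect to `(ε,δ)`. -/
def StableWrt {V : Type*} [Fintype V] [DecidableEq V] (G : SimpleGraph V) (lam : ℝ)
    (B : Set (Finset V)) (eps del : ℝ) : Prop :=
  ∀ S : Finset V, (1 - del) * lam * Fintype.card V ≤ S.card →
    (del * ((S.card : ℝ) / Fintype.card V) ^ 2 * eTotal G ≤ eCount G S) ∨
    ∃ b ∈ B, ((S \ b).card : ℝ) ≤ eps * lam * Fintype.card V

end

lemma kn_count (n k : ℕ) (J B : Finset (Fin n)) (hJk : #J ≤ k) (hB : #B = k)
    (hd : Disjoint J B) :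
    #{A : KVert n k | J ⊆ A.1 ∧ Disjoint A.1 B} = (n - k - #J).choose (k - #J) := by
  have h1 : #((univ : Finset (Fin n)) \ (J ∪ B)) = n - k - #J := by
    rw [card_sdiff_of_subset (subset_univ _), card_union_of_disjoint hd, card_univ,
      Fintype.card_fin, hB]
    omega
  rw [← h1, ← card_powersetCard]
  refine card_bij (fun A _ => A.1 \ J) ?_ ?_ ?_
  · intro A hA
    simp only [mem_filter, mem_univ, true_and] at hA
    rw [mem_powersetCard]
    refine ⟨?_, ?_⟩
    · intro x hx
      have hx' := Finset.mem_sdiff.1 hx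
      simp only [Finset.mem_sdiff, mem_univ, true_and, mem_union, not_or]
      exact ⟨hx'.2, fun h => (disjoint_left.1 hA.2) hx'.1 h⟩
    · rw [card_sdiff_of_subset hA.1, A.2]
  · intro A hA A' hA' h
    simp only [mem_filter, mem_univ, true_and] at hA hA'
    apply Subtype.ext
    rw [← sdiff_union_of_subset hA.1, ← sdiff_union_of_subset hA'.1, h]
  · intro C hC
    rw [mem_powersetCard] at hC
    have hCJ : Disjoint C J := disjoint_left.2 fun x hx hxJ => by
      have := hC.1 hx
      simp only [Finset.mem_sdiff, mem_univ, true_and, mem_union, not_or] at this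
      exact this.1 hxJ
    have hCB : Disjoint C B := disjoint_left.2 fun x hx hxJ => by
      have := hC.1 hx
      simp only [Finset.mem_sdiff, mem_univ, true_and, mem_union, not_or] at this
      exact this.2 hxJ
    refine ⟨⟨C ∪ J, ?_⟩, ?_, ?_⟩
    · rw [card_union_of_disjoint hCJ, hC.2]; omega
    · simp only [mem_filter, mem_univ, true_and]
      exact ⟨subset_union_right, disjoint_union_left.2 ⟨hCB, hd⟩⟩
    · exact union_sdiff_cancel_right hCJ

lemma kn_ie {n : ℕ} (J B : Finset (Fin n)) :
    (∑ I ∈ J.powerset, (-1 : ℝ) ^ #I * (if I ⊆ B then 1 else 0)) =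
      if Disjoint J B then 1 else 0 := by
  have h := Finset.sum_powerset_neg_one_pow_card (x := J ∩ B)
  have h2 : (∑ I ∈ (J ∩ B).powerset, (-1 : ℝ) ^ #I) = if J ∩ B = ∅ then 1 else 0 := by
    exact_mod_cast h
  simp only [mul_ite, mul_one, mul_zero]
  rw [← sum_filter]
  have h3 : J.powerset.filter (fun I => I ⊆ B) = (J ∩ B).powerset := by
    ext I; rw [mem_filter, mem_powerset, mem_powerset, subset_inter_iff]
  rw [h3, h2]
  simp only [disjoint_iff_inter_eq_empty]

lemma kn_disj {n k : ℕ} (v : KVert n k → ℝ) (J : Finset (Fin n))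
    (h0 : ∀ I : Finset (Fin n), #I < #J → ∑ A : KVert n k, (if I ⊆ A.1 then v A else 0) = 0) :
    ∑ B : KVert n k, (if Disjoint J B.1 then v B else 0) =
      (-1) ^ #J * ∑ A : KVert n k, (if J ⊆ A.1 then v A else 0) := by
  have h1 : ∀ B : KVert n k, (if Disjoint J B.1 then v B else 0) =
      ∑ I ∈ J.powerset, (-1 : ℝ) ^ #I * (if I ⊆ B.1 then v B else 0) := by
    intro B
    have := congrArg (· * v B) (kn_ie J B.1)
    simp only [sum_mul, ite_mul, one_mul, zero_mul, mul_assoc] at this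
    exact this.symm
  rw [sum_congr rfl (fun B _ => h1 B), sum_comm]
  simp only [← mul_sum]
  rw [sum_eq_single J]
  · intro I hI hIJ
    rw [h0 I, mul_zero]
    exact card_lt_card ((mem_powerset.1 hI).ssubset_of_ne hIJ)
  · intro h; exact absurd (mem_powerset_self J) h

lemma kn_choose_mono (m k : ℕ) (hkm : k ≤ m) (j : ℕ) (hj : 1 ≤ j) (hjk : j ≤ k) :
    (m - j).choose (k - j) ≤ (m - 1).choose (k - 1) := by
  induction j, hj using Nat.le_induction with
  | base => exact le_rfl
  | succ j hj ih =>
    refine le_trans ?_ (ih (by omega))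
    have h1 : m - j = (m - (j + 1)) + 1 := by omega
    have h2 : k - j = (k - (j + 1)) + 1 := by omega
    rw [h1, h2, Nat.choose_succ_succ]
    exact Nat.le_add_right _ _

lemma kn_eig {n k : ℕ} (hk : 1 ≤ k) (hkn : 2 * k ≤ n) (v : KVert n k → ℝ) (hv : v ≠ 0)
    (hs : ∑ A, v A = 0) (μ : ℝ)
    (he : ∀ A : KVert n k, ∑ B : KVert n k, (if Disjoint A.1 B.1 then v B else 0) = μ * v A) :
    -((n - k - 1).choose (k - 1) : ℝ) ≤ μ := by
  classical
  have hex : ∃ j, ∃ J : Finset (Fin n), #J = j ∧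
      ∑ A : KVert n k, (if J ⊆ A.1 then v A else 0) ≠ 0 := by
    obtain ⟨A, hA⟩ := Function.ne_iff.1 hv
    refine ⟨k, A.1, A.2, ?_⟩
    rw [sum_eq_single A]
    · simpa using hA
    · intro B _ hB
      rw [if_neg]
      intro h
      exact hB (Subtype.ext (eq_of_subset_of_card_le h (by rw [A.2, B.2])).symm)
    · intro h; exact absurd (mem_univ _) h
  obtain ⟨J, hJ, hJne⟩ := Nat.find_spec hex
  have hmin : ∀ I : Finset (Fin n), #I < #J →
      ∑ A : KVert n k, (if I ⊆ A.1 then v A else 0) = 0 := by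
    intro I hI
    by_contra hne
    exact Nat.find_min hex (m := #I) (by omega) ⟨I, rfl, hne⟩
  have hJk : #J ≤ k := by
    by_contra hlt
    apply hJne
    apply sum_eq_zero
    intro A _
    rw [if_neg]
    intro h
    have := card_le_card h
    rw [A.2] at this
    omega
  have hJ1 : 1 ≤ #J := by
    by_contra hlt
    have : J = ∅ := card_eq_zero.1 (by omega)
    subst this
    simp [hs] at hJne
  have hd := kn_disj v J hmin
  have key : μ * ∑ A : KVert n k, (if J ⊆ A.1 then v A else 0) =
      ((n - k - #J).choose (k - #J) : ℝ) *
        ∑ B : KVert n k, (if Disjoint J B.1 then v B else 0) := by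
    rw [mul_sum, mul_sum]
    calc ∑ A : KVert n k, μ * (if J ⊆ A.1 then v A else 0)
        = ∑ A : KVert n k, ∑ B : KVert n k,
            (if J ⊆ A.1 ∧ Disjoint A.1 B.1 then v B else 0) := by
          refine sum_congr rfl fun A _ => ?_
          by_cases h : J ⊆ A.1
          · simp only [h, if_true, true_and]; exact (he A).symm
          · simp [h]
      _ = _ := by
          rw [sum_comm]
          refine sum_congr rfl fun B _ => ?_
          rw [← sum_filter, sum_const, nsmul_eq_mul]
          by_cases h : Disjoint J B.1
          · rw [kn_count n k J B.1 hJk B.2 h, if_pos h]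
          · rw [if_neg h, mul_zero]
            have : ({A : KVert n k | J ⊆ A.1 ∧ Disjoint A.1 B.1} : Finset _) = ∅ := by
              apply filter_eq_empty_iff.2
              rintro A - ⟨h1, h2⟩
              exact h (disjoint_of_subset_left h1 h2)
            rw [this]; simp
  rw [hd, ← mul_assoc] at key
  have hμ := mul_right_cancel₀ hJne key
  have hm : ((n - k - #J).choose (k - #J) : ℝ) ≤ ((n - k - 1).choose (k - 1) : ℝ) := by
    exact_mod_cast kn_choose_mono (n - k) k (by omega) _ hJ1 hJk
  have hp : (0 : ℝ) ≤ ((n - k - #J).choose (k - #J) : ℝ) := by positivity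
  rw [hμ]
  rcases neg_one_pow_eq_or ℝ (#J) with h | h <;> rw [h] <;> linarith

lemma kn_card (n k : ℕ) : Fintype.card (KVert n k) = n.choose k := by
  simp [KVert]

lemma kn_deg {n k : ℕ} (B : KVert n k) :
    ∑ A : KVert n k, (if Disjoint A.1 B.1 then (1 : ℝ) else 0) = ((n - k).choose k : ℝ) := by
  have := kn_count n k ∅ B.1 (by simp) B.2 (by simp)
  simp only [empty_subset, true_and, card_empty, Nat.sub_zero] at this
  rw [← this]; simp

/-- The shifted disjointness matrix. -/
noncomputable def knMat (n k : ℕ) (c b : ℝ) : Matrix (KVert n k) (KVert n k) ℝ :=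
  fun A B => (if Disjoint A.1 B.1 then 1 else 0) + c * (if A = B then 1 else 0) - b

lemma knMat_mulVec (n k : ℕ) (c b : ℝ) (v : KVert n k → ℝ) (A : KVert n k) :
    (knMat n k c b).mulVec v A = ∑ B : KVert n k, (if Disjoint A.1 B.1 then v B else 0)
      + c * v A - b * ∑ B, v B := by
  simp only [Matrix.mulVec, dotProduct, knMat, sub_mul, add_mul, sum_sub_distrib,
    sum_add_distrib, ite_mul, one_mul, zero_mul, mul_ite, mul_one, mul_zero, mul_sum]
  simp

lemma knMat_psd {n k : ℕ} (hk : 1 ≤ k) (hkn : 2 * k ≤ n) :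
    (knMat n k ((n - k - 1).choose (k - 1))
      ((((n - k).choose k : ℝ) + ((n - k - 1).choose (k - 1) : ℝ)) / n.choose k)).PosSemidef := by
  classical
  set c : ℝ := ((n - k - 1).choose (k - 1) : ℝ) with hc
  set b : ℝ := (((n - k).choose k : ℝ) + c) / n.choose k with hb
  have hN : (0 : ℝ) < n.choose k := by exact_mod_cast Nat.choose_pos (by omega)
  have hH : (knMat n k c b).IsHermitian := by
    ext A B
    simp [knMat, Matrix.conjTranspose_apply, disjoint_comm, eq_comm]
  rw [hH.posSemidef_iff_eigenvalues_nonneg]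
  intro i
  simp only [Pi.zero_apply]
  have he := hH.mulVec_eigenvectorBasis i
  set μ := hH.eigenvalues i
  set v : KVert n k → ℝ := (hH.eigenvectorBasis i).ofLp with hvdef
  have hv : v ≠ 0 := by
    intro h
    have h2 := hH.eigenvectorBasis.orthonormal.ne_zero i
    apply h2
    ext x
    exact congrFun h x
  have he' : ∀ A : KVert n k, ∑ B : KVert n k, (if Disjoint A.1 B.1 then v B else 0)
      + c * v A - b * ∑ B, v B = μ * v A := by
    intro A
    rw [← knMat_mulVec]
    exact congrFun he A
  have hsum : μ * ∑ A, v A = 0 := by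
    have h1 : ∑ A : KVert n k, (∑ B : KVert n k, (if Disjoint A.1 B.1 then v B else 0)
      + c * v A - b * ∑ B, v B) = ∑ A, μ * v A := sum_congr rfl fun A _ => he' A
    rw [sum_sub_distrib, sum_add_distrib, sum_comm, ← mul_sum, sum_const, card_univ,
      kn_card, nsmul_eq_mul, ← mul_sum univ v μ] at h1
    have h2 : ∑ B : KVert n k, ∑ A : KVert n k, (if Disjoint A.1 B.1 then v B else 0) =
        ((n - k).choose k : ℝ) * ∑ B, v B := by
      rw [mul_sum]
      refine sum_congr rfl fun B _ => ?_
      rw [← kn_deg B, sum_mul]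
      simp
    rw [h2] at h1
    rw [← h1, hb]
    field_simp
    ring
  rcases mul_eq_zero.1 hsum with h | h
  · exact h.ge
  · have := kn_eig hk hkn v hv h (μ - c) (fun A => by have := he' A; rw [h] at this; linarith)
    linarith

lemma edge_card {V : Type*} [Fintype V] (G : SimpleGraph V) [DecidableRel G.Adj] :
    (2 * Nat.card G.edgeSet : ℝ) = ∑ a, ∑ b, if G.Adj a b then (1 : ℝ) else 0 := by
  classical
  have h := G.sum_degrees_eq_twice_card_edges
  rw [Nat.card_eq_fintype_card, ← SimpleGraph.edgeFinset_card]
  have h' : (2 * #G.edgeFinset : ℝ) = ∑ a, (G.degree a : ℝ) := by exact_mod_cast h.symm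
  rw [h']
  refine sum_congr rfl fun a _ => ?_
  rw [← SimpleGraph.card_neighborFinset_eq_degree, SimpleGraph.neighborFinset_eq_filter]
  simp

lemma kn_adj {n k : ℕ} (hk : 1 ≤ k) (A B : KVert n k) :
    (kneser n k).Adj A B ↔ Disjoint A.1 B.1 := by
  refine ⟨fun h => h.2, fun h => ⟨?_, h⟩⟩
  rintro rfl
  have h1 : A.1 = ∅ := by simpa using h
  have := A.2
  rw [h1] at this
  simp at this
  omega

lemma kn_total {n k : ℕ} (hk : 1 ≤ k) :
    (2 * eTotal (kneser n k) : ℝ) = n.choose k * (n - k).choose k := by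
  classical
  unfold eTotal
  rw [edge_card]
  simp only [kn_adj hk]
  rw [sum_comm, sum_congr rfl (fun B _ => kn_deg B), sum_const, card_univ, kn_card, nsmul_eq_mul]

lemma kn_ecount {n k : ℕ} (hk : 1 ≤ k) (S : Finset (KVert n k)) :
    (2 * eCount (kneser n k) S : ℝ) =
      ∑ A ∈ S, ∑ B ∈ S, if Disjoint A.1 B.1 then (1 : ℝ) else 0 := by
  classical
  unfold eCount
  rw [edge_card]
  simp only [SimpleGraph.comap_adj, Function.Embedding.subtype_apply, kn_adj hk]
  rw [← sum_coe_sort S]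
  refine sum_congr rfl fun A _ => ?_
  rw [← sum_coe_sort S]
  rfl

lemma kn_form {n k : ℕ} (hk : 1 ≤ k) (hkn : 2 * k ≤ n) (S : Finset (KVert n k)) :
    0 ≤ (2 * eCount (kneser n k) S : ℝ) + ((n - k - 1).choose (k - 1) : ℝ) * #S -
      (((n - k).choose k : ℝ) + ((n - k - 1).choose (k - 1) : ℝ)) / n.choose k * (#S) ^ 2 := by
  classical
  have h := (knMat_psd hk hkn).dotProduct_mulVec_nonneg (fun A => if A ∈ S then (1 : ℝ) else 0)
  rw [kn_ecount hk S]
  simp only [dotProduct, knMat_mulVec] at h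
  refine h.trans_eq (Eq.symm ?_)
  simp only [Pi.star_apply, star_trivial, ite_mul, one_mul, zero_mul]
  rw [sum_ite_mem, univ_inter, sum_sub_distrib, sum_add_distrib]
  congr 1
  · congr 1
    · refine sum_congr rfl fun A _ => ?_
      rw [← sum_filter_add_sum_filter_not univ (fun B => B ∈ S)]
      rw [sum_eq_zero (s := univ.filter (fun B => ¬ B ∈ S))]
      · rw [filter_mem_eq_inter, univ_inter, add_zero]
        exact sum_congr rfl fun B hB => by simp [hB]
      · intro B hB
        simp [(mem_filter.1 hB).2]
    · rw [← mul_sum]; simp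
  · simp; ring

/-- The Kneser graph `K(n,k)` is `((1+τ)k/n, τ/(1+τ))`-supersaturated. -/
theorem kneser_supersaturated (n k : ℕ) (hk2 : 2 ≤ k) (hkn : 2 * k ≤ n)
    (τ : ℝ) (hτ : 0 < τ)
    (S : Finset (KVert n k))
    (hS : (1 + τ) * ((k : ℝ) / n) * (n.choose k : ℝ) ≤ S.card) :
    τ / (1 + τ) * ((S.card : ℝ) / (n.choose k : ℝ)) ^ 2 * eTotal (kneser n k) ≤
      (eCount (kneser n k) S : ℝ) := by
  have hk : 1 ≤ k := by omega
  have hf := kn_form hk hkn S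
  have ht := kn_total (n := n) hk
  have hN : (0 : ℝ) < n.choose k := by exact_mod_cast Nat.choose_pos (by omega)
  have hD : (0 : ℝ) < (n - k).choose k := by exact_mod_cast Nat.choose_pos (by omega)
  have hc : ((n : ℝ) - k) * ((n - k - 1).choose (k - 1) : ℝ) = (n - k).choose k * k := by
    have := Nat.add_one_mul_choose_eq (n - k - 1) (k - 1)
    rw [show n - k - 1 + 1 = n - k by omega, show k - 1 + 1 = k by omega] at this
    rw [← Nat.cast_sub (by omega)]
    exact_mod_cast this
  have hn : (0 : ℝ) < n := by exact_mod_cast (by omega : 0 < n)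
  have hk0 : (0 : ℝ) < k := by exact_mod_cast hk
  have hnk : (2 : ℝ) * k ≤ n := by exact_mod_cast hkn
  have hnk' : (0 : ℝ) < n - k := by linarith
  generalize ((n - k - 1).choose (k - 1) : ℝ) = c at *
  generalize ((n - k).choose k : ℝ) = D at *
  generalize (eCount (kneser n k) S : ℝ) = e at *
  generalize (eTotal (kneser n k) : ℝ) = E at *
  generalize (n.choose k : ℝ) = N at *
  obtain ⟨σ, hσ⟩ : ∃ σ : ℝ, σ = #S / N := ⟨_, rfl⟩
  have hs : (#S : ℝ) = σ * N := by rw [hσ]; field_simp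
  rw [← hσ]
  rw [hs] at hf hS
  have hσ1 : (1 + τ) * (k / n) ≤ σ := le_of_mul_le_mul_right hS hN
  have hσ0 : 0 < σ := lt_of_lt_of_le (by positivity) hσ1
  have hE : E = N * D / 2 := by linarith
  have hc' : c = D * k / (n - k) := by rw [eq_div_iff hnk'.ne']; linarith
  have hb : (D + c) / N * (σ * N) ^ 2 = (D + c) * σ ^ 2 * N := by field_simp
  rw [hb] at hf
  rw [hE]
  have h1 : (1 + τ) * k ≤ σ * n := by
    have := mul_le_mul_of_nonneg_right hσ1 hn.le
    calc (1 + τ) * k = (1 + τ) * (k / n) * n := by field_simp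
      _ ≤ _ := this
  -- key scalar inequality
  have h2 : τ / (1 + τ) * σ * D ≤ (D + c) * σ - c := by
    have h3 : (D + c) * σ - c = D * ((σ * n - k) / (n - k)) := by
      rw [hc']; field_simp; ring
    have h4 : τ / (1 + τ) * σ ≤ (σ * n - k) / (n - k) := by
      rw [le_div_iff₀ hnk', div_mul_eq_mul_div, div_mul_eq_mul_div, div_le_iff₀ (by linarith)]
      nlinarith [mul_pos hτ (mul_pos hσ0 hk0)]
    rw [h3]
    nlinarith
  have h5 := mul_le_mul_of_nonneg_left h2 (mul_pos hσ0 hN).le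
  nlinarith
end

section
/- For every 0 < ε < 1 the following holds. Let {G_n} be a sequence of graphs where G_n has N = N(n) vertices with N(n) → ∞ and average degree D = D(n), and let p = p(n) ∈ (0,1] satisfy p·N → ∞ and p·D → 0. Let H_n = G_n[V_p] be the subgraph of G_n induced on the binomial random subset V_p of the vertex set. Then asymptotically almost surely (1−ε)·p·N ≤ α(H_n) ≤ (1+ε)·p·N, where α(H_n) is the independence number of H_n. -/
open MeasureTheory Filter Finset

noncomputable section

/-- Indicator that `v` is chosen. -/
def ind (b : Bool) : ℝ := cond b 1 0

lemma ind_nonneg (b : Bool) : 0 ≤ ind b := by cases b <;> simp [ind]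

section
variable {V : Type} [Fintype V]

instance bern_isProb (p : ℝ) : IsProbabilityMeasure (bernMeasure V p) := by
  unfold bernMeasure; infer_instance

lemma integrable_bern (p : ℝ) (f : (V → Bool) → ℝ) : Integrable f (bernMeasure V p) :=
  Integrable.of_finite

lemma memLp_bern (p : ℝ) (f : (V → Bool) → ℝ) : MemLp f 2 (bernMeasure V p) := by
  rw [memLp_two_iff_integrable_sq (integrable_bern p f).aestronglyMeasurable]
  exact integrable_bern p _

lemma integral_ind (p : ℝ) (h0 : 0 < p) (h1 : p ≤ 1) (v : V) :
    ∫ ω, ind (ω v) ∂(bernMeasure V p) = p := by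
  unfold bernMeasure
  refine (integral_comp_eval (X := fun _ : V => Bool) (i := v)
    (μ := fun _ => (PMF.bernoulli (min (Real.toNNReal p) 1) (min_le_right _ _)).toMeasure)
    (f := ind) (measurable_of_finite _).aestronglyMeasurable).trans ?_
  rw [PMF.integral_eq_sum]
  simp [ind, PMF.bernoulli_apply, h0.le, h1]

lemma indep_ind (p : ℝ) {u v : V} (huv : u ≠ v) :
    ProbabilityTheory.IndepFun (fun ω : V → Bool => ind (ω u)) (fun ω => ind (ω v))
      (bernMeasure V p) := by
  unfold bernMeasure
  exact (ProbabilityTheory.iIndepFun_pi (X := fun _ => ind)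
    (fun i => (measurable_of_finite _).aemeasurable)).indepFun huv

lemma integral_ind_mul (p : ℝ) (h0 : 0 < p) (h1 : p ≤ 1) {u v : V} (huv : u ≠ v) :
    ∫ ω, ind (ω u) * ind (ω v) ∂(bernMeasure V p) = p ^ 2 := by
  have := (indep_ind p huv).integral_mul_eq_mul_integral
    (integrable_bern p _).aestronglyMeasurable (integrable_bern p _).aestronglyMeasurable
  rw [integral_ind p h0 h1, integral_ind p h0 h1] at this
  rw [pow_two, ← this]
  rfl

/-- Number of chosen vertices. -/
def Xc (ω : V → Bool) : ℝ := ∑ v, ind (ω v)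

lemma integral_Xc (p : ℝ) (h0 : 0 < p) (h1 : p ≤ 1) :
    ∫ ω, Xc ω ∂(bernMeasure V p) = p * Fintype.card V := by
  unfold Xc
  rw [integral_finsetSum _ (fun i _ => integrable_bern p _)]
  simp [integral_ind p h0 h1, mul_comm]

lemma variance_Xc (p : ℝ) (h0 : 0 < p) (h1 : p ≤ 1) :
    ProbabilityTheory.variance Xc (bernMeasure V p) ≤ p * Fintype.card V := by
  have hX : (Xc : (V → Bool) → ℝ) = ∑ v, fun ω => ind (ω v) := by
    ext ω; simp [Xc]
  rw [hX, ProbabilityTheory.IndepFun.variance_sum (fun i _ => memLp_bern p _)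
    (fun i _ j _ hij => indep_ind p hij)]
  have : ∀ v : V, ProbabilityTheory.variance (fun ω : V → Bool => ind (ω v))
      (bernMeasure V p) ≤ p := by
    intro v
    refine (ProbabilityTheory.variance_le_expectation_sq
      (integrable_bern p _).aestronglyMeasurable).trans ?_
    have : (fun ω : V → Bool => ind (ω v)) ^ 2 = fun ω => ind (ω v) := by
      ext ω; cases h : ω v <;> simp [ind, h]
    rw [this, integral_ind p h0 h1]
  calc _ ≤ ∑ v : V, p := Finset.sum_le_sum fun v _ => this v
    _ = _ := by simp [mul_comm]

/-- Number of edges inside the chosen set. -/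
def Yc (G : SimpleGraph V) (ω : V → Bool) : ℝ :=
  ∑ e ∈ (Set.toFinite G.edgeSet).toFinset, ind (ω (Quot.out e).1) * ind (ω (Quot.out e).2)

lemma adj_out (G : SimpleGraph V) {e : Sym2 V} (he : e ∈ G.edgeSet) :
    G.Adj (Quot.out e).1 (Quot.out e).2 := by
  rw [← SimpleGraph.mem_edgeSet]
  have : s((Quot.out e).1, (Quot.out e).2) = e := Quot.out_eq e
  rwa [this]

lemma integral_Yc (G : SimpleGraph V) (p : ℝ) (h0 : 0 < p) (h1 : p ≤ 1) :
    ∫ ω, Yc G ω ∂(bernMeasure V p) = p ^ 2 * eTotal G := by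
  unfold Yc
  rw [integral_finsetSum _ (fun i _ => integrable_bern p _)]
  rw [Finset.sum_congr rfl (fun e he => integral_ind_mul p h0 h1
    (adj_out G (by simpa using he)).ne)]
  rw [Finset.sum_const, nsmul_eq_mul, mul_comm, eTotal, Nat.card_coe_set_eq,
    Set.ncard_eq_toFinset_card G.edgeSet]

lemma Xc_eq (ω : V → Bool) : Xc ω = ((univ.filter fun v => ω v = true).card : ℝ) := by
  unfold Xc
  rw [Finset.card_filter]
  push_cast
  refine Finset.sum_congr rfl fun v _ => ?_
  cases h : ω v <;> simp [ind]

lemma alpha_bdd (G : SimpleGraph V) (ω : V → Bool) : BddAbove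
    {m | ∃ S : Finset V, (∀ v ∈ S, ω v = true) ∧ IsIndep G S ∧ S.card = m} := by
  refine ⟨Fintype.card V, ?_⟩
  rintro m ⟨S, -, -, rfl⟩
  exact Finset.card_le_univ S

lemma alpha_le (G : SimpleGraph V) (ω : V → Bool) : (alphaSub G ω : ℝ) ≤ Xc ω := by
  rw [Xc_eq]
  norm_cast
  refine csSup_le ⟨0, ∅, by simp, by simp [IsIndep], rfl⟩ ?_
  rintro m ⟨S, hS, -, rfl⟩
  exact Finset.card_le_card fun v hv => by simpa using hS v hv

lemma le_alpha (G : SimpleGraph V) (ω : V → Bool) : Xc ω - Yc G ω ≤ alphaSub G ω := by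
  classical
  set E := (Set.toFinite G.edgeSet).toFinset.filter
    (fun e => ω (Quot.out e).1 = true ∧ ω (Quot.out e).2 = true) with hE
  have hY : Yc G ω = (E.card : ℝ) := by
    unfold Yc
    rw [hE, Finset.card_filter]
    push_cast
    refine Finset.sum_congr rfl fun e _ => ?_
    cases h : ω (Quot.out e).1 <;> cases h' : ω (Quot.out e).2 <;> simp [ind]
  set A := univ.filter fun v => ω v = true with hA
  set B := E.image (fun e => (Quot.out e).1) with hB
  have h1 : (A \ B).card ≤ alphaSub G ω := by
    refine le_csSup (alpha_bdd G ω) ⟨A \ B, ?_, ?_, rfl⟩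
    · intro v hv
      simp only [hA, Finset.mem_sdiff, Finset.mem_filter] at hv
      exact hv.1.2
    · intro a ha b hb hab
      rw [Finset.mem_sdiff] at ha hb
      have haω : ω a = true := by simpa [hA] using ha.1
      have hbω : ω b = true := by simpa [hA] using hb.1
      have hout : s((Quot.out s(a, b)).1, (Quot.out s(a, b)).2) = s(a, b) := Quot.out_eq _
      have hcase := Sym2.eq_iff.1 hout
      have hmem : s(a, b) ∈ E := by
        rw [hE, Finset.mem_filter]
        refine ⟨by simpa using hab, ?_⟩
        rcases hcase with ⟨h, h'⟩ | ⟨h, h'⟩ <;> rw [h, h'] <;> simp [haω, hbω]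
      have hBm : (Quot.out s(a, b)).1 ∈ B := Finset.mem_image_of_mem _ hmem
      rcases hcase with ⟨h, h'⟩ | ⟨h, h'⟩
      · exact ha.2 (h ▸ hBm)
      · exact hb.2 (h ▸ hBm)
  have h2 : A.card ≤ (A \ B).card + B.card := by
    have := Finset.le_card_sdiff B A
    omega
  have h3 : B.card ≤ E.card := Finset.card_image_le
  rw [Xc_eq, hY]
  have : A.card ≤ alphaSub G ω + E.card := by omega
  have : (A.card : ℝ) ≤ alphaSub G ω + E.card := by exact_mod_cast this
  linarith

lemma main_bound (G : SimpleGraph V) (p ε : ℝ) (h0 : 0 < p) (h1 : p ≤ 1) (hε : 0 < ε)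
    (hN : 0 < Fintype.card V) :
    1 - (4 / ε ^ 2 * (p * (Fintype.card V : ℝ))⁻¹
      + (p * (2 * (eTotal G : ℝ) / Fintype.card V)) / ε) ≤
      (bernMeasure V p).real
        {ω | (1 - ε) * (p * (Fintype.card V : ℝ)) ≤ (alphaSub G ω : ℝ) ∧
             (alphaSub G ω : ℝ) ≤ (1 + ε) * (p * (Fintype.card V : ℝ))} := by
  have hN' : (0 : ℝ) < Fintype.card V := by exact_mod_cast hN
  set M := p * (Fintype.card V : ℝ) with hM
  have hMpos : 0 < M := by positivity
  set c := ε / 2 * M with hc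
  have hcpos : 0 < c := by positivity
  set μ := bernMeasure V p
  set S := {ω : V → Bool | (1 - ε) * M ≤ (alphaSub G ω : ℝ) ∧
             (alphaSub G ω : ℝ) ≤ (1 + ε) * M}
  have hcheb : μ.real {ω | c ≤ |Xc ω - M|} ≤ 4 / ε ^ 2 * M⁻¹ := by
    have h := ProbabilityTheory.meas_ge_le_variance_div_sq (memLp_bern (V := V) p Xc) hcpos
    rw [integral_Xc p h0 h1] at h
    have h' := ENNReal.toReal_mono ENNReal.ofReal_ne_top h
    rw [ENNReal.toReal_ofReal (div_nonneg (ProbabilityTheory.variance_nonneg _ _)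
      (sq_nonneg _))] at h'
    refine h'.trans ?_
    calc _ ≤ M / c ^ 2 := by gcongr; exact variance_Xc p h0 h1
      _ = _ := by rw [hc]; field_simp; ring
  have hmark : μ.real {ω | c ≤ Yc G ω} ≤ (p * (2 * (eTotal G : ℝ) / Fintype.card V)) / ε := by
    have h := mul_meas_ge_le_integral_of_nonneg (μ := μ) (f := Yc G)
      (Eventually.of_forall fun ω => Finset.sum_nonneg fun e _ =>
        mul_nonneg (ind_nonneg _) (ind_nonneg _)) (integrable_bern p _) c
    rw [integral_Yc G p h0 h1, mul_comm, ← le_div_iff₀ hcpos] at h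
    refine h.trans (le_of_eq ?_)
    rw [hc, hM]; field_simp
  have hcover : (Set.univ : Set (V → Bool)) ⊆
      S ∪ ({ω | c ≤ |Xc ω - M|} ∪ {ω | c ≤ Yc G ω}) := by
    intro ω _
    by_contra hcon
    simp only [Set.mem_union, Set.mem_setOf_eq, not_or, not_le] at hcon
    obtain ⟨hS, hx, hy⟩ := hcon
    apply hS
    rw [abs_lt] at hx
    have := alpha_le G ω
    have := le_alpha G ω
    constructor <;> nlinarith
  have h2 := (measureReal_mono (μ := μ) hcover).trans ((measureReal_union_le _ _).trans
    (add_le_add_right (measureReal_union_le _ _) _))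
  rw [probReal_univ] at h2
  linarith

end

end

/-- For a sequence of graphs and `N^{-1} ≪ p ≪ D^{-1}`,
a.a.s. `α(H_n) = (1±ε)pN`. -/
theorem alpha_random_small_p (ε : ℝ) (hε0 : 0 < ε) (hε1 : ε < 1)
    (V : ℕ → Type) (iV : ∀ n, Fintype (V n)) (G : ∀ n, SimpleGraph (V n))
    (hN : Tendsto (fun n => Fintype.card (V n)) atTop atTop)
    (p : ℕ → ℝ) (hp0 : ∀ n, 0 < p n) (hp1 : ∀ n, p n ≤ 1)
    (hpN : Tendsto (fun n => p n * (Fintype.card (V n) : ℝ)) atTop atTop)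
    (hpD : Tendsto (fun n => p n * (2 * (eTotal (G n) : ℝ) / Fintype.card (V n)))
      atTop (nhds 0)) :
    Tendsto (fun n =>
      bernMeasure (V n) (p n)
        {ω | (1 - ε) * (p n * (Fintype.card (V n) : ℝ)) ≤ (alphaSub (G n) ω : ℝ) ∧
             (alphaSub (G n) ω : ℝ) ≤ (1 + ε) * (p n * (Fintype.card (V n) : ℝ))})
      atTop (nhds 1) := by
  have hlow : Tendsto (fun n => 1 - (4 / ε ^ 2 * (p n * (Fintype.card (V n) : ℝ))⁻¹
      + (p n * (2 * (eTotal (G n) : ℝ) / Fintype.card (V n))) / ε)) atTop (nhds 1) := by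
    have := ((hpN.inv_tendsto_atTop.const_mul (4 / ε ^ 2)).add (hpD.div_const ε)).const_sub 1
    simpa using this
  have hreal : Tendsto (fun n =>
      (bernMeasure (V n) (p n)).real
        {ω | (1 - ε) * (p n * (Fintype.card (V n) : ℝ)) ≤ (alphaSub (G n) ω : ℝ) ∧
             (alphaSub (G n) ω : ℝ) ≤ (1 + ε) * (p n * (Fintype.card (V n) : ℝ))})
      atTop (nhds 1) := by
    refine tendsto_of_tendsto_of_tendsto_of_le_of_le' hlow tendsto_const_nhds ?_
      (Eventually.of_forall fun n => measureReal_le_one)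
    filter_upwards [hN.eventually_gt_atTop 0] with n hn
    exact main_bound (G n) (p n) ε (hp0 n) (hp1 n) hε0 hn
  have := (ENNReal.continuous_ofReal.tendsto 1).comp hreal
  rw [ENNReal.ofReal_one] at this
  refine this.congr fun n => ?_
  simp [Function.comp, measureReal_def, ENNReal.ofReal_toReal (measure_ne_top _ _)]
end

section
/- Let 0 < ε < 1, let λ, γ ∈ (0,1), and let G be a (λ,γ)-supersaturated graph on N vertices with average degree D > 0. Let p ∈ (0,1] satisfy 9·D^{−1} ≤ p ≤ λ^{ε}·(λγD)^{−1}, and let H = G[V_p] be the subgraph of G induced on the binomial random subset V_p of the vertex set. Then P( α(H) > (4N/(εγD))·ln(pD) ) ≤ exp( −(N/(γD))·ln(pD) ). -/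
open MeasureTheory Filter Finset

section helpers

variable {V : Type*} [Fintype V] [DecidableEq V]

/-- Vertices of `A` outside the closed neighbourhood of `v`. -/
noncomputable def farSet (G : SimpleGraph V) (A : Finset V) (v : V) : Finset V := by
  classical exact A.filter (fun w => w ≠ v ∧ ¬ G.Adj v w)

/-- Neighbours of `v` in `A`. -/
noncomputable def nbSet (G : SimpleGraph V) (A : Finset V) (v : V) : Finset V := by
  classical exact A.filter (fun w => G.Adj v w)

lemma far_sub (G : SimpleGraph V) (A : Finset V) (v : V) : farSet G A v ⊆ A.erase v := by
  classical
  intro w hw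
  simp only [farSet, Finset.mem_filter] at hw
  simp [hw.1, hw.2.1]

lemma far_card (G : SimpleGraph V) (A : Finset V) (v : V) :
    (farSet G A v).card + (nbSet G A v).card ≤ A.card := by
  classical
  rw [← Finset.card_union_of_disjoint]
  · apply Finset.card_le_card
    intro w hw
    simp only [farSet, nbSet, Finset.mem_union, Finset.mem_filter] at hw
    tauto
  · rw [Finset.disjoint_left]
    intro w h1 h2
    simp only [farSet, nbSet, Finset.mem_filter] at h1 h2
    tauto

lemma small_bound (G : SimpleGraph V) (W : Finset V → ℝ) (c : ℝ) (hc : 0 ≤ c)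
    (h0 : W ∅ ≤ 1) (hmono : ∀ A B, A ⊆ B → W A ≤ W B)
    (hrec : ∀ A, ∀ v ∈ A, W A ≤ W (A.erase v) + c * W (farSet G A v)) (A : Finset V) :
    W A ≤ Real.exp (c * A.card) := by
  induction A using Finset.strongInduction with
  | H A ih =>
    rcases A.eq_empty_or_nonempty with rfl | ⟨v, hv⟩
    · simpa using h0
    · have h1 := hrec A v hv
      have h2 := hmono _ _ (far_sub G A v)
      have h3 := ih _ (Finset.erase_ssubset hv)
      have hcard : (A.card : ℝ) = (A.erase v).card + 1 := by
        exact_mod_cast (Finset.card_erase_add_one hv).symm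
      rw [hcard, mul_add, Real.exp_add, mul_one]
      have h4 := Real.add_one_le_exp c
      have h5 : c * W (farSet G A v) ≤ c * W (A.erase v) := mul_le_mul_of_nonneg_left h2 hc
      have h6 : (1 + c) * W (A.erase v) ≤ (1 + c) * Real.exp (c * (A.erase v).card) :=
        mul_le_mul_of_nonneg_left h3 (by linarith)
      have h7 := mul_le_mul_of_nonneg_left h4 (Real.exp_pos (c * (A.erase v).card)).le
      nlinarith

/-- The potential. -/
noncomputable def psi (b φ M K n : ℝ) : ℝ :=
  if n < K then b * (n / K) else b + φ * M * Real.log (n / K)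

lemma psi_mono (b φ M K n m : ℝ) (hb : 0 ≤ b) (hφ : 0 ≤ φ) (hM : 0 < M) (hK : 0 < K)
    (hnm : n ≤ m) : psi b φ M K n ≤ psi b φ M K m := by
  unfold psi
  split_ifs with h1 h2 h2
  · gcongr
  · have : n / K ≤ 1 := by rw [div_le_one hK]; exact h1.le
    have h3 : 0 ≤ Real.log (m / K) := Real.log_nonneg (by rw [le_div_iff₀ hK]; linarith)
    have : 0 ≤ φ * M * Real.log (m / K) := by positivity
    nlinarith
  · linarith
  · have : 0 < n / K := div_pos (by linarith) hK
    gcongr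

lemma psi_step (b φ M K n n' : ℝ) (hφ : 0 ≤ φ) (hM : 0 < M) (hK : 0 < K)
    (hb : φ * M ≤ b) (hn : K ≤ n) (hn' : n' ≤ n - n / M) :
    psi b φ M K n' + φ ≤ psi b φ M K n := by
  have hn0 : 0 < n := by linarith
  have hb0 : 0 ≤ b := le_trans (by positivity) hb
  have hφM : 0 ≤ φ * M := by positivity
  obtain ⟨r, hr⟩ : ∃ r, r = n / K := ⟨_, rfl⟩
  obtain ⟨s, hs⟩ : ∃ s, s = n' / K := ⟨_, rfl⟩
  have hr1 : 1 ≤ r := by rw [hr, le_div_iff₀ hK]; linarith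
  have hr0 : 0 < r := by linarith
  have hsr : s ≤ r - r / M := by
    rw [hs, hr, div_le_iff₀ hK]
    have : (n / K - n / K / M) * K = n - n / M := by field_simp
    linarith
  have hlog : 1 - 1 / r ≤ Real.log r := by
    have := Real.one_sub_inv_le_log_of_pos hr0
    simpa using this
  have key : psi b φ M K n = b + φ * M * Real.log r := by
    unfold psi; rw [if_neg (by linarith), hr]
  have hφe : φ = φ * M * (1 / M) := by field_simp
  rw [key]
  unfold psi
  rw [← hs]
  split_ifs with h1
  · have hs1 : s < 1 := by rw [hs, div_lt_one hK]; exact h1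
    by_cases h2 : 1 ≤ r - r / M
    · have : 1 / M ≤ Real.log r := by
        have : 1 / r ≤ 1 - 1 / M := by
          rw [div_le_iff₀ hr0]
          have : (1 - 1 / M) * r = r - r / M := by ring
          linarith
        linarith
      have h3 := mul_le_mul_of_nonneg_left this hφM
      have h4 := mul_le_mul_of_nonneg_left hs1.le hb0
      linarith
    · push Not at h2
      have h5 : 1 / M ≤ 1 - (r - r / M) + Real.log r := by
        have h6 : 1 - 1 / M ≤ 1 / r := by
          rw [le_div_iff₀ hr0]
          have : (1 - 1 / M) * r = r - r / M := by ring
          linarith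
        have h7 : (r - 1) * (1 - 1 / M) ≤ (r - 1) * (1 / r) :=
          mul_le_mul_of_nonneg_left h6 (by linarith)
        have h8 : (r - 1) * (1 / r) = 1 - 1 / r := by field_simp
        have h9 : (r - 1) * (1 - 1 / M) = r - r / M - 1 + 1 / M := by ring
        linarith
      have h10 := mul_le_mul_of_nonneg_left h5 hφM
      have h11 : φ * M * (1 - (r - r / M)) ≤ b * (1 - s) :=
        mul_le_mul hb (by linarith) (by linarith) hb0
      nlinarith
  · have hs1 : 1 ≤ s := by rw [hs, le_div_iff₀ hK]; linarith
    have h2 : Real.log s - Real.log r ≤ - (1 / M) := by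
      rw [← Real.log_div (by linarith) hr0.ne']
      have h3 := Real.log_le_sub_one_of_pos (show 0 < s / r by positivity)
      have h4 : s / r ≤ 1 - 1 / M := by
        rw [div_le_iff₀ hr0]
        have : (1 - 1 / M) * r = r - r / M := by ring
        linarith
      linarith
    have h3 := mul_le_mul_of_nonneg_left h2 hφM
    linarith

lemma large_bound (G : SimpleGraph V) (W : Finset V → ℝ) (c : ℝ) (hc : 0 ≤ c)
    (h0 : W ∅ ≤ 1) (hmono : ∀ A B, A ⊆ B → W A ≤ W B)
    (hrec : ∀ A, ∀ v ∈ A, W A ≤ W (A.erase v) + c * W (farSet G A v))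
    (a b φ M K : ℝ) (hφ : 0 ≤ φ) (hM : 0 < M) (hK : 0 < K) (hb : φ * M ≤ b)
    (hcK : c * K ≤ b) (ha : c * Real.exp (-φ) ≤ a)
    (hdeg : ∀ A : Finset V, K ≤ A.card → ∃ v ∈ A, (A.card : ℝ) / M ≤ (nbSet G A v).card)
    (A : Finset V) :
    W A ≤ Real.exp (psi b φ M K A.card + a * A.card) := by
  have ha0 : 0 ≤ a := le_trans (by positivity) ha
  have hb0 : 0 ≤ b := le_trans (by positivity) hb
  induction A using Finset.strongInduction with
  | H A ih =>
    by_cases hA : (A.card : ℝ) < K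
    · refine (small_bound G W c hc h0 hmono hrec A).trans (Real.exp_le_exp.2 ?_)
      have h1 : psi b φ M K A.card = b * (A.card / K) := by unfold psi; rw [if_pos hA]
      have h2 : c * A.card = c * K * (A.card / K) := by field_simp
      have h3 : c * K * (A.card / K) ≤ b * (A.card / K) := by gcongr
      have h4 : 0 ≤ a * A.card := by positivity
      linarith
    · push Not at hA
      obtain ⟨v, hv, hd⟩ := hdeg A hA
      have hcard : (A.card : ℝ) = (A.erase v).card + 1 := by
        exact_mod_cast (Finset.card_erase_add_one hv).symm
      have hfc : ((farSet G A v).card : ℝ) ≤ (A.erase v).card := by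
        exact_mod_cast Finset.card_le_card (far_sub G A v)
      have hfs : farSet G A v ⊂ A := lt_of_le_of_lt (far_sub G A v) (Finset.erase_ssubset hv)
      have hfn : ((farSet G A v).card : ℝ) + (nbSet G A v).card ≤ A.card := by
        exact_mod_cast far_card G A v
      have i1 := ih _ (Finset.erase_ssubset hv)
      have i2 := ih _ hfs
      have p1 := psi_mono b φ M K (A.erase v).card A.card hb0 hφ hM hK (by linarith)
      have p2 := psi_step b φ M K A.card (farSet G A v).card hφ hM hK hb hA (by linarith)
      set P := psi b φ M K A.card
      set m : ℝ := ((A.erase v).card : ℝ)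
      have j1 : W (A.erase v) ≤ Real.exp (P + a * m) :=
        i1.trans (Real.exp_le_exp.2 (by linarith))
      have j2 : W (farSet G A v) ≤ Real.exp (P + a * m) * Real.exp (-φ) := by
        rw [← Real.exp_add]
        refine i2.trans (Real.exp_le_exp.2 ?_)
        have := mul_le_mul_of_nonneg_left hfc ha0
        linarith
      have j3 : c * W (farSet G A v) ≤ Real.exp (P + a * m) * a := by
        calc c * W (farSet G A v) ≤ c * (Real.exp (P + a * m) * Real.exp (-φ)) := by gcongr
          _ = Real.exp (P + a * m) * (c * Real.exp (-φ)) := by ring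
          _ ≤ _ := by gcongr
      rw [hcard, mul_add, ← add_assoc, Real.exp_add, mul_one]
      have h4 := mul_le_mul_of_nonneg_left (Real.add_one_le_exp a) (Real.exp_pos (P + a * m)).le
      have := hrec A v hv
      linarith

/-- degree lemma -/
lemma exists_deg (G : SimpleGraph V) (S : Finset V) (t : ℝ) (hS : S.Nonempty)
    (h : S.card * t ≤ 2 * (eCount G S : ℝ)) : ∃ v ∈ S, t ≤ (nbSet G S v).card := by
  classical
  by_contra hcon
  push Not at hcon
  have hsum : ∑ v ∈ S, (nbSet G S v).card = 2 * eCount G S := by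
    unfold eCount
    rw [Nat.card_eq_fintype_card, ← SimpleGraph.edgeFinset_card,
      ← SimpleGraph.sum_degrees_eq_twice_card_edges]
    rw [← Finset.sum_coe_sort S]
    refine Finset.sum_congr rfl fun v _ => ?_
    rw [← SimpleGraph.card_neighborFinset_eq_degree]
    symm
    refine Finset.card_bij (fun w _ => (w : V)) ?_ ?_ ?_
    · intro w hw
      simp only [SimpleGraph.mem_neighborFinset, SimpleGraph.comap_adj] at hw
      simp only [nbSet, Finset.mem_filter]
      exact ⟨w.2, hw⟩
    · intro w _ w' _ h
      exact Subtype.ext h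
    · intro w hw
      simp only [nbSet, Finset.mem_filter] at hw
      exact ⟨⟨w, hw.1⟩, by simpa using hw.2, rfl⟩
  have h1 : ∑ v ∈ S, ((nbSet G S v).card : ℝ) < ∑ v ∈ S, t :=
    Finset.sum_lt_sum_of_nonempty hS hcon
  have h2 : ∑ v ∈ S, ((nbSet G S v).card : ℝ) = 2 * (eCount G S : ℝ) := by
    exact_mod_cast hsum
  rw [Finset.sum_const, nsmul_eq_mul] at h1
  linarith

/-- weight -/
noncomputable def wt (p : ℝ) (ω : V → Bool) : ℝ := ∏ v, if ω v then p else 1 - p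

/-- local independence number -/
noncomputable def al (G : SimpleGraph V) (A : Finset V) (ω : V → Bool) : ℕ := by
  classical exact
    (A.powerset.filter (fun S => (∀ v ∈ S, ω v = true) ∧ IsIndep G S)).sup Finset.card

lemma al_le (G : SimpleGraph V) (A : Finset V) (ω : V → Bool) (S : Finset V) (h1 : S ⊆ A)
    (h2 : ∀ v ∈ S, ω v = true) (h3 : IsIndep G S) : S.card ≤ al G A ω := by
  classical
  unfold al
  apply Finset.le_sup (f := Finset.card)
  simp [h1, h3]
  exact h2

lemma al_exists (G : SimpleGraph V) (A : Finset V) (ω : V → Bool) :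
    ∃ S ⊆ A, (∀ v ∈ S, ω v = true) ∧ IsIndep G S ∧ S.card = al G A ω := by
  classical
  unfold al
  obtain ⟨S, hS, h⟩ := Finset.exists_mem_eq_sup
    (A.powerset.filter (fun S => (∀ v ∈ S, ω v = true) ∧ IsIndep G S))
    ⟨∅, Finset.mem_filter.2 ⟨by simp, by simp, by intro a ha; simp at ha⟩⟩ Finset.card
  simp only [Finset.mem_filter, Finset.mem_powerset] at hS
  exact ⟨S, hS.1, hS.2.1, hS.2.2, h.symm⟩

lemma al_mono (G : SimpleGraph V) (A B : Finset V) (ω : V → Bool) (h : A ⊆ B) :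
    al G A ω ≤ al G B ω := by
  obtain ⟨S, h1, h2, h3, h4⟩ := al_exists G A ω
  rw [← h4]
  exact al_le G B ω S (h1.trans h) h2 h3

lemma al_congr (G : SimpleGraph V) (A : Finset V) (ω ω' : V → Bool)
    (h : ∀ v ∈ A, ω v = ω' v) : al G A ω = al G A ω' := by
  apply le_antisymm
  · obtain ⟨S, h1, h2, h3, h4⟩ := al_exists G A ω
    rw [← h4]
    exact al_le G A ω' S h1 (fun v hv => by rw [← h v (h1 hv)]; exact h2 v hv) h3
  · obtain ⟨S, h1, h2, h3, h4⟩ := al_exists G A ω'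
    rw [← h4]
    exact al_le G A ω S h1 (fun v hv => by rw [h v (h1 hv)]; exact h2 v hv) h3

lemma al_rec (G : SimpleGraph V) (A : Finset V) (ω : V → Bool) (v : V) (z : ℝ) (hz : 1 ≤ z) :
    z ^ al G A ω ≤ z ^ al G (A.erase v) ω +
      (if ω v then z * z ^ al G (farSet G A v) ω else 0) := by
  classical
  have hz0 : 0 ≤ z := by linarith
  obtain ⟨S, h1, h2, h3, h4⟩ := al_exists G A ω
  rw [← h4]
  by_cases hv : v ∈ S
  · rw [if_pos (h2 v hv), ← pow_succ']
    have h5 : (S.erase v).card ≤ al G (farSet G A v) ω := by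
      apply al_le
      · intro w hw
        rw [Finset.mem_erase] at hw
        simp only [farSet, Finset.mem_filter]
        exact ⟨h1 hw.2, hw.1, h3 v hv w hw.2⟩
      · intro w hw
        exact h2 w (Finset.mem_of_mem_erase hw)
      · intro x hx y hy
        exact h3 x (Finset.mem_of_mem_erase hx) y (Finset.mem_of_mem_erase hy)
    have h6 := Finset.card_erase_add_one hv
    have h7 : z ^ S.card ≤ z ^ (al G (farSet G A v) ω + 1) :=
      pow_le_pow_right₀ hz (by omega)
    have : 0 ≤ z ^ al G (A.erase v) ω := by positivity
    linarith
  · have h5 : S.card ≤ al G (A.erase v) ω := by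
      apply al_le _ _ _ _ _ h2 h3
      intro w hw
      rw [Finset.mem_erase]
      exact ⟨fun h => hv (h ▸ hw), h1 hw⟩
    have h7 : z ^ S.card ≤ z ^ (al G (A.erase v) ω) := pow_le_pow_right₀ hz h5
    have : (0:ℝ) ≤ (if ω v then z * z ^ al G (farSet G A v) ω else 0) := by
      split_ifs <;> positivity
    linarith

lemma wt_nonneg (p : ℝ) (hp0 : 0 ≤ p) (hp1 : p ≤ 1) (ω : V → Bool) : 0 ≤ wt p ω := by
  unfold wt
  apply Finset.prod_nonneg
  intro v _
  split_ifs <;> linarith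

lemma wt_sum (p : ℝ) : ∑ ω : V → Bool, wt p ω = 1 := by
  unfold wt
  have := (Finset.prod_univ_sum (fun _ : V => (Finset.univ : Finset Bool))
    (fun _ x => if x then p else 1 - p)).symm
  rw [Fintype.piFinset_univ] at this
  rw [this]
  simp

lemma wt_flip (p : ℝ) (ω : V → Bool) (v : V) (h : ω v = true) :
    (1 - p) * wt p ω = p * wt p (Function.update ω v false) := by
  unfold wt
  rw [← Finset.mul_prod_erase _ _ (Finset.mem_univ v),
    ← Finset.mul_prod_erase (a := v) _ (fun u => if Function.update ω v false u then p else 1 - p)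
      (Finset.mem_univ v)]
  have : ∏ x ∈ Finset.univ.erase v, (if Function.update ω v false x then p else 1 - p)
      = ∏ x ∈ Finset.univ.erase v, (if ω x then p else 1 - p) := by
    refine Finset.prod_congr rfl fun x hx => ?_
    rw [Function.update_of_ne (Finset.ne_of_mem_erase hx)]
  rw [this]
  simp [h]
  ring

lemma indep_v (p : ℝ) (v : V) (f : (V → Bool) → ℝ)
    (hf : ∀ ω x, f (Function.update ω v x) = f ω) :
    ∑ ω : V → Bool, wt p ω * (if ω v then f ω else 0) = p * ∑ ω : V → Bool, wt p ω * f ω := by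
  have h1 : ∑ ω : V → Bool, wt p ω * f ω = ∑ ω : V → Bool, wt p ω * (if ω v then f ω else 0)
      + ∑ ω : V → Bool, wt p ω * (if ω v then 0 else f ω) := by
    rw [← Finset.sum_add_distrib]
    refine Finset.sum_congr rfl fun ω _ => ?_
    split_ifs <;> ring
  have h2 : (1 - p) * ∑ ω : V → Bool, wt p ω * (if ω v then f ω else 0)
      = p * ∑ ω : V → Bool, wt p ω * (if ω v then 0 else f ω) := by
    rw [Finset.mul_sum, Finset.mul_sum]
    have hinv : ∀ ω : V → Bool, Function.update (Function.update ω v (!ω v)) v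
        (!(Function.update ω v (!ω v) v)) = ω := by
      intro ω; simp
    refine Finset.sum_bij' (fun ω _ => Function.update ω v (!ω v))
      (fun ω _ => Function.update ω v (!ω v)) (by simp) (by simp)
      (fun ω _ => hinv ω) (fun ω _ => hinv ω) ?_
    intro ω _
    simp only [hf, Function.update_self]
    cases h : ω v
    · simp
    · have := wt_flip p ω v h
      simp
      rw [← mul_assoc, ← mul_assoc, this]
  rw [h1, mul_add, ← h2]
  ring

/-- exponential moment -/
noncomputable def WW (G : SimpleGraph V) (p z : ℝ) (A : Finset V) : ℝ :=
  ∑ ω : V → Bool, wt p ω * z ^ al G A ω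

lemma WW_mono (G : SimpleGraph V) (p z : ℝ) (hp0 : 0 ≤ p) (hp1 : p ≤ 1) (hz : 1 ≤ z)
    (A B : Finset V) (h : A ⊆ B) : WW G p z A ≤ WW G p z B := by
  unfold WW
  refine Finset.sum_le_sum fun ω _ => ?_
  exact mul_le_mul_of_nonneg_left (pow_le_pow_right₀ hz (al_mono G A B ω h))
    (wt_nonneg p hp0 hp1 ω)

lemma WW_empty (G : SimpleGraph V) (p z : ℝ) : WW G p z ∅ ≤ 1 := by
  unfold WW
  have : ∀ ω, al G ∅ ω = 0 := by
    intro ω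
    obtain ⟨S, h1, h2, h3, h4⟩ := al_exists G ∅ ω
    rw [← h4, Finset.subset_empty.1 h1]; simp
  simp only [this, pow_zero, mul_one]
  exact (wt_sum p).le

lemma WW_rec (G : SimpleGraph V) (p z : ℝ) (hp0 : 0 ≤ p) (hp1 : p ≤ 1) (hz : 1 ≤ z)
    (A : Finset V) (v : V) :
    WW G p z A ≤ WW G p z (A.erase v) + p * z * WW G p z (farSet G A v) := by
  have h1 := indep_v p v (fun ω => z * z ^ al G (farSet G A v) ω) (by
    intro ω x
    rw [al_congr G (farSet G A v) (Function.update ω v x) ω]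
    intro u hu
    rw [Function.update_of_ne (Finset.ne_of_mem_erase (far_sub G A v hu))])
  have h2 : p * z * WW G p z (farSet G A v)
      = p * ∑ ω : V → Bool, wt p ω * (z * z ^ al G (farSet G A v) ω) := by
    unfold WW
    rw [mul_assoc, Finset.mul_sum (a := z)]
    congr 1
    refine Finset.sum_congr rfl fun ω _ => ?_
    ring
  rw [h2, ← h1]
  unfold WW
  rw [← Finset.sum_add_distrib]
  refine Finset.sum_le_sum fun ω _ => ?_
  rw [← mul_add]
  exact mul_le_mul_of_nonneg_left (al_rec G A ω v z hz) (wt_nonneg p hp0 hp1 ω)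

lemma bern_singleton (p : ℝ) (hp0 : 0 ≤ p) (hp1 : p ≤ 1) (ω : V → Bool) :
    bernMeasure V p {ω} = ENNReal.ofReal (wt p ω) := by
  unfold bernMeasure wt
  rw [Measure.pi_singleton, ENNReal.ofReal_prod_of_nonneg
    (fun v _ => by split_ifs <;> linarith)]
  refine Finset.prod_congr rfl fun v _ => ?_
  rw [PMF.toMeasure_apply_singleton _ _ (measurableSet_singleton _)]
  have hm : min (Real.toNNReal p) 1 = Real.toNNReal p :=
    min_eq_left (by simpa using hp1)
  cases h : ω v
  · simp [PMF.bernoulli_apply, hm]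
    rw [ENNReal.ofReal_sub _ hp0]
    simp [ENNReal.ofReal]
  · simp [PMF.bernoulli_apply, hm]
    simp [ENNReal.ofReal]

lemma alphaSub_le (G : SimpleGraph V) (ω : V → Bool) : alphaSub G ω ≤ al G Finset.univ ω := by
  unfold alphaSub
  refine csSup_le ⟨0, ∅, by simp, by intro a ha; simp at ha, by simp⟩ ?_
  rintro m ⟨S, h1, h2, rfl⟩
  exact al_le G _ ω S (Finset.subset_univ _) h1 h2

lemma markov_bern (G : SimpleGraph V) (p θ m : ℝ) (hp0 : 0 ≤ p) (hp1 : p ≤ 1) (hθ : 0 ≤ θ) :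
    bernMeasure V p {ω | m < (alphaSub G ω : ℝ)} ≤
      ENNReal.ofReal (Real.exp (-(θ * m)) * WW G p (Real.exp θ) Finset.univ) := by
  classical
  have hset : {ω : V → Bool | m < (alphaSub G ω : ℝ)} =
      ((Finset.univ.filter (fun ω : V → Bool => m < (alphaSub G ω : ℝ)) : Finset _) : Set _) := by
    ext ω; simp
  rw [hset, ← sum_measure_singleton]
  simp only [bern_singleton p hp0 hp1]
  rw [← ENNReal.ofReal_sum_of_nonneg (fun ω _ => wt_nonneg p hp0 hp1 ω)]
  apply ENNReal.ofReal_le_ofReal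
  unfold WW
  rw [Finset.mul_sum]
  have hnn : ∀ ω, 0 ≤ Real.exp (-(θ * m)) * (wt p ω * Real.exp θ ^ al G Finset.univ ω) := by
    intro ω
    have := wt_nonneg p hp0 hp1 ω
    positivity
  refine le_trans (Finset.sum_le_sum fun ω hω => ?_)
    (Finset.sum_le_sum_of_subset_of_nonneg (Finset.filter_subset _ _) fun ω _ _ => hnn ω)
  have h1 : m < (alphaSub G ω : ℝ) := (Finset.mem_filter.1 hω).2
  have h2 : (alphaSub G ω : ℝ) ≤ al G Finset.univ ω := by exact_mod_cast alphaSub_le G ω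
  rw [← Real.exp_nat_mul, mul_left_comm, ← Real.exp_add]
  have h3 : 0 ≤ -(θ * m) + al G Finset.univ ω * θ := by nlinarith
  exact le_mul_of_one_le_right (wt_nonneg p hp0 hp1 ω) (Real.one_le_exp h3)

lemma deg_alg (n N g D : ℝ) (hN : 0 < N) (hg : 0 < g) (hD : 0 < D) :
    n * (n / (N / (g * D))) = 2 * (g * (n / N) ^ 2 * (D * N / 2)) := by
  field_simp

end helpers

set_option maxHeartbeats 1000000 in
/-- Transference, flat range: tail bound on the independence
number of the random induced subgraph of a supersaturated graph. -/
theorem transference_flat_range {V : Type*} [Fintype V] (G : SimpleGraph V)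
    (ε lam gam : ℝ) (hε0 : 0 < ε) (hε1 : ε < 1)
    (hlam : lam ∈ Set.Ioo (0 : ℝ) 1) (hgam : gam ∈ Set.Ioo (0 : ℝ) 1)
    (hsat : Supersaturated G lam gam)
    (D : ℝ) (hD : D = 2 * (eTotal G : ℝ) / Fintype.card V) (hDpos : 0 < D)
    (p : ℝ) (hp0 : 0 < p) (hp1 : p ≤ 1)
    (hplo : 9 / D ≤ p) (hphi : p ≤ lam ^ ε / (lam * gam * D)) :
    bernMeasure V p
        {ω | 4 * (Fintype.card V : ℝ) / (ε * gam * D) * Real.log (p * D) <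
          (alphaSub G ω : ℝ)} ≤
      ENNReal.ofReal (Real.exp (-((Fintype.card V : ℝ) / (gam * D)) * Real.log (p * D))) := by
  classical
  obtain ⟨hl0, hl1⟩ := hlam
  obtain ⟨hg0, hg1⟩ := hgam
  obtain ⟨N, hN⟩ : ∃ N : ℝ, N = (Fintype.card V : ℝ) := ⟨_, rfl⟩
  have hN0 : 0 < N := by
    rcases Nat.eq_zero_or_pos (Fintype.card V) with h | h
    · rw [h] at hD; simp at hD; linarith
    · rw [hN]; exact_mod_cast h
  obtain ⟨M, hM⟩ : ∃ M : ℝ, M = N / (gam * D) := ⟨_, rfl⟩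
  have hM0 : 0 < M := by rw [hM]; positivity
  obtain ⟨L, hL⟩ : ∃ L : ℝ, L = Real.log (p * D) := ⟨_, rfl⟩
  have hpD : 9 ≤ p * D := by rwa [div_le_iff₀ hDpos] at hplo
  have hL2 : 2 ≤ L := by
    rw [hL, Real.le_log_iff_exp_le (by linarith)]
    have h1 := Real.exp_one_lt_d9
    have h2 : Real.exp 2 = Real.exp 1 * Real.exp 1 := by rw [← Real.exp_add]; norm_num
    have h3 := Real.exp_pos 1
    nlinarith
  obtain ⟨l, hl⟩ : ∃ l : ℝ, l = Real.log (max (p * gam * D) 1) := ⟨_, rfl⟩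
  have hX0 : 0 < max (p * gam * D) 1 := lt_of_lt_of_le one_pos (le_max_right _ _)
  have hel : Real.exp l = max (p * gam * D) 1 := by rw [hl, Real.exp_log hX0]
  have hl_nn : 0 ≤ l := by rw [hl]; exact Real.log_nonneg (le_max_right _ _)
  have hlL : l ≤ L := by
    rw [hl, hL]
    apply Real.log_le_log hX0
    apply max_le _ (by linarith)
    have : p * D * gam ≤ p * D * 1 := by gcongr
    linarith
  have hllam : l ≤ (1 - ε) * (- Real.log lam) := by
    have hlog : Real.log lam < 0 := Real.log_neg hl0 hl1
    have : max (p * gam * D) 1 ≤ Real.exp ((1 - ε) * (- Real.log lam)) := by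
      apply max_le
      · have h1 : lam ^ ε = Real.exp (ε * Real.log lam) := by
          rw [Real.rpow_def_of_pos hl0, mul_comm]
        have h2 : Real.exp ((1 - ε) * (- Real.log lam)) = Real.exp (ε * Real.log lam) / lam := by
          have h3 : (1 - ε) * (- Real.log lam) = ε * Real.log lam - Real.log lam := by ring
          rw [h3, Real.exp_sub, Real.exp_log hl0]
        rw [h2, ← h1, le_div_iff₀ hl0]
        rw [le_div_iff₀ (by positivity)] at hphi
        linarith
      · apply Real.one_le_exp
        nlinarith
    rw [← hel] at this
    exact Real.exp_le_exp.1 this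
  have hpN : p * N * Real.exp (-l) ≤ M := by
    have h1 : p * N = (p * gam * D) * M := by rw [hM]; field_simp
    have h2 : p * gam * D ≤ Real.exp l := by rw [hel]; exact le_max_left _ _
    calc p * N * Real.exp (-l) = (p * gam * D) * (M * Real.exp (-l)) := by rw [h1]; ring
      _ ≤ Real.exp l * (M * Real.exp (-l)) := by gcongr
      _ = M * (Real.exp l * Real.exp (-l)) := by ring
      _ = M := by rw [← Real.exp_add]; simp
  obtain ⟨Q, hQ⟩ : ∃ Q : ℝ, Q = 2 * L / ε := ⟨_, rfl⟩
  have hQe : Q * ε = 2 * L := by rw [hQ]; field_simp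
  have hQ2 : 2 * L ≤ Q := by
    rw [hQ, le_div_iff₀ hε0]; nlinarith
  have hQ0 : 0 < Q := by linarith
  have hlogQ : 5 / 4 ≤ Real.log Q := by
    have h1 : Real.log 4 ≤ Real.log Q := Real.log_le_log (by norm_num) (by linarith)
    have h2 : Real.log 4 = 2 * Real.log 2 := by
      rw [show (4:ℝ) = 2 ^ 2 by norm_num, Real.log_pow]; norm_num
    have := Real.log_two_gt_d9
    linarith
  obtain ⟨θ, hθ⟩ : ∃ θ : ℝ, θ = Real.log Q + ε * l := ⟨_, rfl⟩
  have hθ0 : 0 ≤ θ := by rw [hθ]; nlinarith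
  have hz : Real.exp θ = Q * Real.exp (ε * l) := by rw [hθ, Real.exp_add, Real.exp_log hQ0]
  have hz1 : 1 ≤ Real.exp θ := Real.one_le_exp hθ0
  obtain ⟨φ, hφ⟩ : ∃ φ : ℝ, φ = (1 + ε) * l := ⟨_, rfl⟩
  have hφ0 : 0 ≤ φ := by rw [hφ]; positivity
  have hK0 : 0 < N * Real.exp (-φ) := by positivity
  have hφQ : φ ≤ Q := by rw [hφ]; nlinarith
  have hcomb : Real.exp (ε * l) * Real.exp (-φ) = Real.exp (-l) := by
    rw [← Real.exp_add, hφ]; congr 1; ring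
  have hcK : p * Real.exp θ * (N * Real.exp (-φ)) ≤ Q * M := by
    calc p * Real.exp θ * (N * Real.exp (-φ))
        = Q * (p * N * (Real.exp (ε * l) * Real.exp (-φ))) := by rw [hz]; ring
      _ ≤ Q * M := by rw [hcomb]; gcongr
  have hca : p * Real.exp θ * Real.exp (-φ) ≤ Q * M / N := by
    rw [le_div_iff₀ hN0]
    linarith
  have hlamK : lam ≤ Real.exp (-φ) := by
    rw [← Real.log_le_iff_le_exp hl0]
    have hlog : Real.log lam < 0 := Real.log_neg hl0 hl1
    have h1 : (1 + ε) * l ≤ (1 + ε) * ((1 - ε) * (- Real.log lam)) := by gcongr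
    rw [hφ]
    nlinarith [mul_pos hε0 hε0]
  have hdeg : ∀ A : Finset V, N * Real.exp (-φ) ≤ A.card →
      ∃ v ∈ A, (A.card : ℝ) / M ≤ (nbSet G A v).card := by
    intro A hA
    apply exists_deg
    · rw [← Finset.card_pos]
      have : (0 : ℝ) < A.card := by linarith
      exact_mod_cast this
    · have h1 := hsat A (by
        rw [← hN]
        have := mul_le_mul_of_nonneg_left hlamK hN0.le
        linarith)
      rw [← hN] at h1 hD
      have h2 : (A.card : ℝ) * (A.card / M) = 2 * (gam * (A.card / N) ^ 2 * eTotal G) := by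
        have h3 : (eTotal G : ℝ) = D * N / 2 := by rw [hD]; field_simp
        rw [h3, hM]
        exact deg_alg _ _ _ _ hN0 hg0 hDpos
      rw [h2]
      linarith
  have hbig := large_bound G (WW G p (Real.exp θ)) (p * Real.exp θ) (by positivity)
    (WW_empty G p _) (WW_mono G p _ hp0.le hp1 hz1)
    (fun A v _ => WW_rec G p _ hp0.le hp1 hz1 A v)
    (Q * M / N) (Q * M) φ M (N * Real.exp (-φ)) hφ0 hM0 hK0
    (by gcongr) hcK hca hdeg Finset.univ
  rw [Finset.card_univ, ← hN] at hbig
  have hpsi : psi (Q * M) φ M (N * Real.exp (-φ)) N = Q * M + φ * M * φ := by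
    unfold psi
    have h1 : N * Real.exp (-φ) ≤ N := by
      have : Real.exp (-φ) ≤ 1 := Real.exp_le_one_iff.2 (by linarith)
      nlinarith
    rw [if_neg (by linarith)]
    have h2 : N / (N * Real.exp (-φ)) = Real.exp φ := by
      have h3 : 0 < Real.exp φ := Real.exp_pos φ
      rw [Real.exp_neg, div_eq_iff (by positivity)]
      rw [mul_comm, mul_assoc, inv_mul_cancel₀ h3.ne', mul_one]
    rw [h2, Real.log_exp]
  rw [hpsi] at hbig
  have hm : 4 * (Fintype.card V : ℝ) / (ε * gam * D) * Real.log (p * D) = 2 * Q * M := by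
    rw [← hN, ← hL, hQ, hM]; field_simp; ring
  rw [hm, ← hN, ← hL, ← hM]
  refine (markov_bern G p θ (2 * Q * M) hp0.le hp1 hθ0).trans (ENNReal.ofReal_le_ofReal ?_)
  refine (mul_le_mul_of_nonneg_left hbig (Real.exp_pos _).le).trans ?_
  rw [← Real.exp_add, Real.exp_le_exp]
  have e1 : Q * M / N * N = Q * M := by field_simp
  rw [e1]
  have e2 : φ * φ ≤ 4 * L * l := by
    rw [hφ]
    have h1 : (1 + ε) * (1 + ε) ≤ 4 := by nlinarith
    have h2 : l * l ≤ L * l := by gcongr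
    have h3 : 0 ≤ l * l := by positivity
    nlinarith
  have e3 : 2 * Q * θ = 2 * Q * Real.log Q + 4 * L * l := by
    rw [hθ]; linear_combination 2 * l * hQe
  have e4 : 2 * Q * (5 / 4) ≤ 2 * Q * Real.log Q := by gcongr
  have e5 : -(2 * Q * θ) + (2 * Q + φ * φ) ≤ - L := by linarith
  have e6 := mul_le_mul_of_nonneg_left e5 hM0.le
  linarith
end

section
/- For every 0 < ε < 1 there exists a constant C > 0 such that the following holds. Let λ, γ ∈ (0,1), and let G be a (λ,γ)-supersaturated graph on N vertices with average degree D > 0. Let p ∈ (0,1] satisfy p ≥ C·(λγD)^{−1}·ln²(e/λ), and let H = G[V_p] be the subgraph of G induced on the binomial random subset V_p of the vertex set. Then P( α(H) ≥ (1+ε)·λ·p·N ) ≤ exp( −ε²·p·λ·N/24 ). -/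
open MeasureTheory Filter Finset

section Helpers
open Classical

/-- Largest independent subset of `A` inside the random set. -/
noncomputable def indA {V : Type} [Fintype V] (G : SimpleGraph V) (A : Finset V) (ω : V → Bool) : ℕ :=
  ((A.powerset).filter (fun S => (∀ v ∈ S, ω v = true) ∧ IsIndep G S)).sup Finset.card

lemma indA_exists {V : Type} [Fintype V] (G : SimpleGraph V) (A : Finset V) (ω : V → Bool) :
    ∃ S : Finset V, S ⊆ A ∧ (∀ v ∈ S, ω v = true) ∧ IsIndep G S ∧ S.card = indA G A ω := by
  have hne : ((A.powerset).filter (fun S => (∀ v ∈ S, ω v = true) ∧ IsIndep G S)).Nonempty :=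
    ⟨∅, Finset.mem_filter.2 ⟨by simp, by simp, by simp [IsIndep]⟩⟩
  obtain ⟨S, hS, h⟩ := Finset.exists_mem_eq_sup _ hne Finset.card
  rw [Finset.mem_filter, Finset.mem_powerset] at hS
  exact ⟨S, hS.1, hS.2.1, hS.2.2, h.symm⟩

lemma le_indA {V : Type} [Fintype V] (G : SimpleGraph V) {A : Finset V} {ω : V → Bool}
    {S : Finset V} (h1 : S ⊆ A) (h2 : ∀ v ∈ S, ω v = true) (h3 : IsIndep G S) :
    S.card ≤ indA G A ω := by
  unfold indA
  exact Finset.le_sup (f := Finset.card)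
    (Finset.mem_filter.2 ⟨Finset.mem_powerset.2 h1, h2, h3⟩)

/-- Bernoulli weight of a configuration. -/
noncomputable def bw {V : Type} [Fintype V] (p : ℝ) (ω : V → Bool) : ℝ :=
  ∏ v, (if ω v = true then p else 1 - p)

lemma bw_nonneg {V : Type} [Fintype V] {p : ℝ} (h0 : 0 ≤ p) (h1 : p ≤ 1) (ω : V → Bool) :
    0 ≤ bw p ω := by
  refine Finset.prod_nonneg fun v _ => ?_
  split_ifs <;> linarith

lemma indA_step {V : Type} [Fintype V] (G : SimpleGraph V) (A : Finset V) (ω : V → Bool)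
    (v : V) (t : ℝ) (ht : 0 ≤ t) :
    Real.exp (t * indA G A ω) ≤ Real.exp (t * indA G (A.erase v) ω) +
      Real.exp t * (if ω v = true then 1 else 0) *
        Real.exp (t * indA G ((A.erase v).filter (fun u => ¬ G.Adj v u)) ω) := by
  obtain ⟨S, h1, h2, h3, h4⟩ := indA_exists G A ω
  by_cases hv : v ∈ S
  · have hle : (S.erase v).card ≤ indA G ((A.erase v).filter (fun u => ¬ G.Adj v u)) ω := by
      refine le_indA G (fun u hu => ?_) (fun u hu => h2 u (Finset.mem_of_mem_erase hu))
        (fun a ha b hb => h3 a (Finset.mem_of_mem_erase ha) b (Finset.mem_of_mem_erase hb))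
      exact Finset.mem_filter.2 ⟨Finset.mem_erase.2 ⟨Finset.ne_of_mem_erase hu,
        h1 (Finset.mem_of_mem_erase hu)⟩, h3 v hv u (Finset.mem_of_mem_erase hu)⟩
    have hc : (S.erase v).card + 1 = S.card := Finset.card_erase_add_one hv
    have hle' : indA G A ω ≤ 1 + indA G ((A.erase v).filter (fun u => ¬ G.Adj v u)) ω := by omega
    have hle2 : (indA G A ω : ℝ) ≤
        1 + indA G ((A.erase v).filter (fun u => ¬ G.Adj v u)) ω := by exact_mod_cast hle'
    rw [if_pos (h2 v hv), mul_one, ← Real.exp_add]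
    have : Real.exp (t * indA G A ω) ≤
        Real.exp (t + t * indA G ((A.erase v).filter (fun u => ¬ G.Adj v u)) ω) := by
      apply Real.exp_le_exp.2
      nlinarith
    have := Real.exp_pos (t * indA G (A.erase v) ω)
    linarith
  · have hle : S.card ≤ indA G (A.erase v) ω :=
      le_indA G (fun u hu => Finset.mem_erase.2 ⟨fun h => hv (h ▸ hu), h1 hu⟩) h2 h3
    rw [h4] at hle
    have hle2 : (indA G A ω : ℝ) ≤ indA G (A.erase v) ω := by exact_mod_cast hle
    have h5 : Real.exp (t * indA G A ω) ≤ Real.exp (t * indA G (A.erase v) ω) := by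
      apply Real.exp_le_exp.2
      gcongr
    have h6 : 0 ≤ Real.exp t * (if ω v = true then 1 else 0) *
        Real.exp (t * indA G ((A.erase v).filter (fun u => ¬ G.Adj v u)) ω) := by
      split_ifs <;> positivity
    linarith

lemma indA_base {V : Type} [Fintype V] (G : SimpleGraph V) (A : Finset V) (ω : V → Bool)
    (t : ℝ) (ht : 0 ≤ t) :
    Real.exp (t * indA G A ω) ≤ ∏ v ∈ A, (if ω v = true then Real.exp t else 1) := by
  obtain ⟨S, h1, h2, h3, h4⟩ := indA_exists G A ω
  have : S.card ≤ (A.filter (fun v => ω v = true)).card :=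
    Finset.card_le_card fun v hv => Finset.mem_filter.2 ⟨h1 hv, h2 v hv⟩
  rw [Finset.prod_ite, Finset.prod_const, Finset.prod_const_one, mul_one, ← Real.exp_nat_mul, ← h4]
  apply Real.exp_le_exp.2
  rw [mul_comm]
  gcongr

lemma base_sum {V : Type} [Fintype V] (p c : ℝ) (A S : Finset V) (h : Disjoint A S) :
    ∑ ω : V → Bool, bw p ω * ((∏ v ∈ A, (if ω v = true then c else 1)) *
      ∏ v ∈ S, (if ω v = true then (1:ℝ) else 0)) = (1 + p * (c - 1)) ^ A.card * p ^ S.card := by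
  have key : ∀ ω : V → Bool, bw p ω * ((∏ v ∈ A, (if ω v = true then c else 1)) *
      ∏ v ∈ S, (if ω v = true then (1:ℝ) else 0)) =
      ∏ v, ((if ω v = true then p else 1 - p) * ((if v ∈ A then (if ω v = true then c else 1) else 1) *
        (if v ∈ S then (if ω v = true then (1:ℝ) else 0) else 1))) := by
    intro ω
    rw [Finset.prod_mul_distrib, Finset.prod_mul_distrib, Finset.prod_ite_mem, Finset.prod_ite_mem,
      Finset.univ_inter, Finset.univ_inter]
    rfl
  simp_rw [key]
  have h2 := Finset.prod_univ_sum (fun _ : V => (Finset.univ : Finset Bool))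
    (fun v b => (if b = true then p else 1 - p) * ((if v ∈ A then (if b = true then c else 1) else 1) *
        (if v ∈ S then (if b = true then (1:ℝ) else 0) else 1)))
  rw [Fintype.piFinset_univ] at h2
  rw [← h2]
  have h3 : ∀ v : V, (∑ b : Bool, (if b = true then p else 1 - p) *
      ((if v ∈ A then (if b = true then c else 1) else 1) *
        (if v ∈ S then (if b = true then (1:ℝ) else 0) else 1))) =
      (if v ∈ A then 1 + p * (c - 1) else 1) * (if v ∈ S then p else 1) := by
    intro v
    rw [Fintype.sum_bool]
    by_cases hA : v ∈ A
    · have hS : v ∉ S := Finset.disjoint_left.1 h hA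
      simp [hA, hS]; ring
    · by_cases hS : v ∈ S <;> simp [hA, hS]
  rw [Finset.prod_congr rfl (fun v _ => h3 v), Finset.prod_mul_distrib, Finset.prod_ite_mem,
    Finset.prod_ite_mem, Finset.univ_inter, Finset.univ_inter, Finset.prod_const, Finset.prod_const]

lemma main_ind {V : Type} [Fintype V] (G : SimpleGraph V) (p t y β K : ℝ)
    (hp0 : 0 ≤ p) (hp1 : p ≤ 1) (ht : 0 ≤ t) (hy0 : 0 < y) (hy1 : y ≤ 1) (hβ1 : β ≤ 1)
    (hdeg : ∀ A : Finset V, K < A.card → ∃ v ∈ A, β * A.card ≤ (A.filter (fun u => G.Adj v u)).card) :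
    ∀ (n : ℕ) (A : Finset V), A.card = n → ∀ (q : ℕ) (S : Finset V), Disjoint A S →
      (1 - β) ^ q * A.card ≤ K →
      ∑ ω : V → Bool, bw p ω * (Real.exp (t * indA G A ω) *
        ∏ v ∈ S, (if ω v = true then (1:ℝ) else 0)) ≤
      p ^ S.card * Real.exp (p * (Real.exp t - 1) * K) * (1 / y) ^ q *
        (1 + p * Real.exp t * y) ^ A.card := by
  intro n
  induction n using Nat.strong_induction_on with
  | _ n ih =>
  intro A hAn q S hAS hq
  have het : 1 ≤ Real.exp t := Real.one_le_exp ht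
  have hS0 : ∀ ω : V → Bool, 0 ≤ ∏ v ∈ S, (if ω v = true then (1:ℝ) else 0) := fun ω =>
    Finset.prod_nonneg fun v _ => by split_ifs <;> norm_num
  have hy : 1 ≤ 1 / y := by rw [le_div_iff₀ hy0]; linarith
  by_cases hK : K < A.card
  · obtain ⟨v, hvA, hv⟩ := hdeg A hK
    cases q with
    | zero => simp at hq; linarith
    | succ q =>
    set B := (A.erase v).filter (fun u => ¬ G.Adj v u) with hB
    have hvS : v ∉ S := Finset.disjoint_left.1 hAS hvA
    have hcE : (A.erase v).card + 1 = A.card := Finset.card_erase_add_one hvA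
    have hcB : B.card ≤ (A.erase v).card := Finset.card_le_card (Finset.filter_subset _ _)
    have hcB2 : B.card + (A.filter (fun u => G.Adj v u)).card ≤ A.card := by
      rw [← Finset.card_union_of_disjoint]
      · apply Finset.card_le_card
        intro u hu
        rcases Finset.mem_union.1 hu with h | h
        · exact Finset.mem_of_mem_erase (Finset.mem_filter.1 h).1
        · exact (Finset.mem_filter.1 h).1
      · rw [Finset.disjoint_left]
        intro u hu hu'
        exact (Finset.mem_filter.1 hu).2 (Finset.mem_filter.1 hu').2
    have hcB3 : (B.card : ℝ) ≤ (1 - β) * A.card := by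
      have : (B.card : ℝ) + (A.filter (fun u => G.Adj v u)).card ≤ A.card := by exact_mod_cast hcB2
      linarith
    have hb : 0 ≤ 1 - β := by linarith
    have i1 := ih _ (by omega) (A.erase v) rfl (q + 1) S
      (hAS.mono_left (Finset.erase_subset _ _)) (by
        refine le_trans ?_ hq
        gcongr
        exact Finset.erase_subset _ _)
    have i2 := ih _ (by omega) B rfl q (insert v S) (by
        rw [Finset.disjoint_insert_right]
        refine ⟨?_, hAS.mono_left ((Finset.filter_subset _ _).trans (Finset.erase_subset _ _))⟩
        rw [hB]; simp) (by
        refine le_trans ?_ hq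
        rw [pow_succ, mul_assoc]
        gcongr)
    rw [Finset.card_insert_of_notMem hvS] at i2
    set M := Real.exp (p * (Real.exp t - 1) * K)
    set z := 1 + p * Real.exp t * y with hz
    have hz1 : 1 ≤ z := by rw [hz]; have : 0 ≤ p * Real.exp t * y := by positivity
                           linarith
    have i3 : p ^ (S.card + 1) * M * (1 / y) ^ q * z ^ B.card ≤
        p ^ (S.card + 1) * M * (1 / y) ^ q * z ^ (A.erase v).card := by
      gcongr
    calc ∑ ω : V → Bool, bw p ω * (Real.exp (t * indA G A ω) *
          ∏ v ∈ S, (if ω v = true then (1:ℝ) else 0))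
        ≤ ∑ ω : V → Bool, (bw p ω * (Real.exp (t * indA G (A.erase v) ω) *
          ∏ v ∈ S, (if ω v = true then (1:ℝ) else 0)) + Real.exp t * (bw p ω *
          (Real.exp (t * indA G B ω) * ∏ v ∈ insert v S, (if ω v = true then (1:ℝ) else 0)))) := by
          refine Finset.sum_le_sum fun ω _ => ?_
          have := mul_le_mul_of_nonneg_left (mul_le_mul_of_nonneg_right (indA_step G A ω v t ht)
            (hS0 ω)) (bw_nonneg hp0 hp1 ω)
          refine this.trans (le_of_eq ?_)
          rw [Finset.prod_insert hvS]
          ring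
      _ ≤ p ^ S.card * M * (1 / y) ^ (q + 1) * z ^ (A.erase v).card +
          Real.exp t * (p ^ (S.card + 1) * M * (1 / y) ^ q * z ^ (A.erase v).card) := by
          rw [Finset.sum_add_distrib, ← Finset.mul_sum]
          have := mul_le_mul_of_nonneg_left (i2.trans i3) (Real.exp_pos t).le
          linarith
      _ = p ^ S.card * M * (1 / y) ^ (q + 1) * z ^ A.card := by
          rw [← hcE, pow_succ z, pow_succ (1 / y), pow_succ p]
          nth_rewrite 4 [hz]
          field_simp
  · push Not at hK
    calc ∑ ω : V → Bool, bw p ω * (Real.exp (t * indA G A ω) *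
          ∏ v ∈ S, (if ω v = true then (1:ℝ) else 0))
        ≤ ∑ ω : V → Bool, bw p ω * ((∏ v ∈ A, (if ω v = true then Real.exp t else 1)) *
          ∏ v ∈ S, (if ω v = true then (1:ℝ) else 0)) :=
          Finset.sum_le_sum fun ω _ => mul_le_mul_of_nonneg_left
            (mul_le_mul_of_nonneg_right (indA_base G A ω t ht) (hS0 ω)) (bw_nonneg hp0 hp1 ω)
      _ = (1 + p * (Real.exp t - 1)) ^ A.card * p ^ S.card := base_sum _ _ _ _ hAS
      _ ≤ Real.exp (p * (Real.exp t - 1) * K) * p ^ S.card := by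
          have h0 : 0 ≤ p * (Real.exp t - 1) := mul_nonneg hp0 (by linarith)
          refine mul_le_mul_of_nonneg_right ?_ (by positivity)
          calc (1 + p * (Real.exp t - 1)) ^ A.card ≤ (Real.exp (p * (Real.exp t - 1))) ^ A.card := by
                apply pow_le_pow_left₀ (by linarith)
                linarith [Real.add_one_le_exp (p * (Real.exp t - 1))]
            _ = Real.exp (p * (Real.exp t - 1) * A.card) := by
                rw [← Real.exp_nat_mul]; ring_nf
            _ ≤ _ := Real.exp_le_exp.2 (mul_le_mul_of_nonneg_left hK h0)
      _ = p ^ S.card * Real.exp (p * (Real.exp t - 1) * K) * 1 * 1 := by ring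
      _ ≤ _ := by
          gcongr
          · exact one_le_pow₀ hy
          · apply one_le_pow₀
            have : 0 ≤ p * Real.exp t * y := by positivity
            linarith

lemma exists_deg_s10 {V : Type} [Fintype V] (G : SimpleGraph V) (lam gam D : ℝ)
    (hs : Supersaturated G lam gam) (hN : 0 < Fintype.card V)
    (hD : D = 2 * (eTotal G : ℝ) / Fintype.card V) (A : Finset V) (hne : A.Nonempty)
    (hA : lam * Fintype.card V ≤ A.card) :
    ∃ v ∈ A, gam * D / Fintype.card V * A.card ≤ (A.filter (fun u => G.Adj v u)).card := by
  have h := hs A hA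
  have hNR : (0:ℝ) < Fintype.card V := by exact_mod_cast hN
  by_contra hcon
  push Not at hcon
  have hdeg : ∀ v : ((A : Set V) : Type), (G.induce (A : Set V)).degree v =
      (A.filter (fun u => G.Adj v u)).card := by
    intro v
    rw [← SimpleGraph.card_neighborFinset_eq_degree]
    refine Finset.card_bij (fun u _ => u.1) ?_ ?_ ?_
    · intro u hu
      rw [SimpleGraph.mem_neighborFinset] at hu
      exact Finset.mem_filter.2 ⟨u.2, hu⟩
    · intro a _ b _ hab
      exact Subtype.ext hab
    · intro u hu
      rw [Finset.mem_filter] at hu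
      exact ⟨⟨u, hu.1⟩, by rw [SimpleGraph.mem_neighborFinset]; exact hu.2, rfl⟩
  have hsum := (G.induce (A : Set V)).sum_degrees_eq_twice_card_edges
  have hcard : eCount G A = (G.induce (A : Set V)).edgeFinset.card := by
    unfold eCount
    rw [Nat.card_eq_fintype_card, SimpleGraph.edgeFinset_card]
  rw [← hcard] at hsum
  simp_rw [hdeg] at hsum
  have hsum2 : ∑ v ∈ A, (A.filter (fun u => G.Adj v u)).card = 2 * eCount G A := by
    rw [← hsum]
    exact (Finset.sum_coe_sort A (fun v => (A.filter (fun u => G.Adj v u)).card)).symm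
  have hlt : ∑ v ∈ A, ((A.filter (fun u => G.Adj v u)).card : ℝ) <
      ∑ v ∈ A, gam * D / Fintype.card V * A.card := Finset.sum_lt_sum_of_nonempty hne hcon
  have hsum3 : ∑ v ∈ A, ((A.filter (fun u => G.Adj v u)).card : ℝ) = 2 * eCount G A := by
    exact_mod_cast hsum2
  rw [hsum3, Finset.sum_const, nsmul_eq_mul, hD] at hlt
  have e : (A.card : ℝ) * (gam * (2 * (eTotal G : ℝ) / Fintype.card V) / Fintype.card V * A.card) =
      2 * (gam * ((A.card : ℝ) / Fintype.card V) ^ 2 * eTotal G) := by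
    field_simp
  linarith

lemma bern_le {V : Type} [Fintype V] (p : ℝ) (h0 : 0 ≤ p) (h1 : p ≤ 1) (s : Set (V → Bool))
    (f : (V → Bool) → ℝ) (hf : ∀ ω, 0 ≤ f ω) (hs : ∀ ω ∈ s, 1 ≤ f ω) :
    bernMeasure V p s ≤ ENNReal.ofReal (∑ ω, bw p ω * f ω) := by
  have hsing : ∀ ω : V → Bool, bernMeasure V p {ω} = ENNReal.ofReal (bw p ω) := by
    intro ω
    unfold bernMeasure bw
    rw [Measure.pi_singleton, ENNReal.ofReal_prod_of_nonneg
      (fun v _ => by split_ifs <;> linarith)]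
    refine Finset.prod_congr rfl fun v _ => ?_
    rw [PMF.toMeasure_apply_singleton _ _ (measurableSet_singleton _), PMF.bernoulli_apply]
    have hmin : min (Real.toNNReal p) 1 = Real.toNNReal p :=
      min_eq_left (by rw [Real.toNNReal_le_one]; exact h1)
    rw [hmin]
    cases ω v
    · simp only [cond_false, Bool.false_eq_true, if_false]
      rw [ENNReal.ofReal_sub _ h0, ENNReal.ofReal_one]
      rfl
    · simp only [cond_true, if_true]
      rfl
  have hfin : s = ↑(s.toFinite.toFinset) := by simp
  rw [hfin, ← sum_measure_singleton]
  simp_rw [hsing]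
  rw [← ENNReal.ofReal_sum_of_nonneg (fun ω _ => bw_nonneg h0 h1 ω)]
  apply ENNReal.ofReal_le_ofReal
  calc ∑ ω ∈ s.toFinite.toFinset, bw p ω ≤ ∑ ω ∈ s.toFinite.toFinset, bw p ω * f ω := by
        refine Finset.sum_le_sum fun ω hω => ?_
        have := hs ω (by simpa using hω)
        nlinarith [bw_nonneg h0 h1 ω]
    _ ≤ _ := Finset.sum_le_sum_of_subset_of_nonneg (Finset.subset_univ _)
        fun ω _ _ => mul_nonneg (bw_nonneg h0 h1 ω) (hf ω)

end Helpers

/-- Transference, dense range: tail bound on the independence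
number of the random induced subgraph of a supersaturated graph. -/
theorem transference_dense_range (ε : ℝ) (hε0 : 0 < ε) (hε1 : ε < 1) :
    ∃ C : ℝ, 0 < C ∧
      ∀ (V : Type) (_ : Fintype V) (G : SimpleGraph V) (lam gam : ℝ),
        lam ∈ Set.Ioo (0 : ℝ) 1 → gam ∈ Set.Ioo (0 : ℝ) 1 →
        Supersaturated G lam gam →
        ∀ D : ℝ, D = 2 * (eTotal G : ℝ) / Fintype.card V → 0 < D →
        ∀ p : ℝ, 0 < p → p ≤ 1 →
          C / (lam * gam * D) * (Real.log (Real.exp 1 / lam)) ^ 2 ≤ p →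
          bernMeasure V p
              {ω | (1 + ε) * lam * p * Fintype.card V ≤ (alphaSub G ω : ℝ)} ≤
            ENNReal.ofReal (Real.exp (-(ε ^ 2 * p * lam * Fintype.card V) / 24)) := by
  have hη0 : 0 < ε ^ 2 / 20 := by positivity
  have hη1 : ε ^ 2 / 20 < 1 := by nlinarith
  set η := ε ^ 2 / 20 with hη
  have hlη : 0 ≤ Real.log (1 / η) := Real.log_nonneg (by rw [le_div_iff₀ hη0]; linarith)
  refine ⟨(1 + Real.log (1 / η)) / η, by positivity, ?_⟩
  intro V _ G lam gam hlam hgam hsup D hD hD0 p hp0 hp1 hp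
  classical
  obtain ⟨hl0, hl1⟩ := hlam
  obtain ⟨hg0, hg1⟩ := hgam
  have hN : 0 < Fintype.card V := by
    rcases Nat.eq_zero_or_pos (Fintype.card V) with h | h
    · rw [h] at hD; simp at hD; linarith
    · exact h
  have hNR : (0:ℝ) < Fintype.card V := by exact_mod_cast hN
  set N : ℝ := ((Fintype.card V : ℕ) : ℝ) with hNdef
  set β := gam * D / N with hβ
  have hβ0 : 0 < β := by positivity
  have hβ1 : β ≤ 1 := by
    have : Nonempty V := Fintype.card_pos_iff.1 hN
    obtain ⟨v, -, hv⟩ := exists_deg_s10 G lam gam D hsup hN hD Finset.univ Finset.univ_nonempty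
      (by rw [Finset.card_univ, ← hNdef]; nlinarith)
    have h2 : ((Finset.univ.filter (fun u => G.Adj v u)).card : ℝ) ≤ N := by
      rw [hNdef]; exact_mod_cast Finset.card_le_univ _
    rw [Finset.card_univ, ← hNdef] at hv
    have : β * N ≤ 1 * N := by linarith
    exact le_of_mul_le_mul_right this hNR
  have hdeg : ∀ A : Finset V, lam * N < A.card →
      ∃ v ∈ A, β * A.card ≤ (A.filter (fun u => G.Adj v u)).card := by
    intro A hA
    refine exists_deg_s10 G lam gam D hsup hN hD A ?_ hA.le
    rw [← Finset.card_pos]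
    have : (0:ℝ) < A.card := lt_trans (by positivity) hA
    exact_mod_cast this
  set l := Real.log (1 / lam) with hl
  have hl0' : 0 ≤ l := Real.log_nonneg (by rw [le_div_iff₀ hl0]; linarith)
  have hL : Real.log (Real.exp 1 / lam) = 1 + l := by
    rw [hl, Real.log_div (Real.exp_pos 1).ne' hl0.ne', Real.log_exp, Real.log_div one_ne_zero hl0.ne',
      Real.log_one]; ring
  rw [hL] at hp
  set q := ⌈l / β⌉₊ with hq
  have hq1 : l / β ≤ q := Nat.le_ceil _
  have hq2 : (q:ℝ) ≤ l / β + 1 := (Nat.ceil_lt_add_one (by positivity)).le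
  have hqK : (1 - β) ^ q * ((Finset.univ : Finset V).card : ℝ) ≤ lam * N := by
    rw [Finset.card_univ, ← hNdef]
    refine mul_le_mul_of_nonneg_right ?_ hNR.le
    calc (1 - β) ^ q ≤ (Real.exp (-β)) ^ q :=
          pow_le_pow_left₀ (by linarith) (Real.one_sub_le_exp_neg β) q
      _ = Real.exp (-(β * q)) := by rw [← Real.exp_nat_mul]; ring_nf
      _ ≤ Real.exp (-l) := by
          apply Real.exp_le_exp.2
          rw [div_le_iff₀ hβ0] at hq1
          linarith
      _ = lam := by rw [hl, ← Real.log_inv, one_div, inv_inv, Real.exp_log hl0]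
  set X := lam * p * N with hX
  have hX0 : 0 < X := by positivity
  -- the main numeric bound on `q`
  have hqX : (q:ℝ) * (l + Real.log (1 / η)) ≤ η * X := by
    have e1 : (1 + Real.log (1 / η)) / η / (lam * gam * D) * (1 + l) ^ 2 * (lam * N * η)
        = (1 + Real.log (1 / η)) * (1 + l) ^ 2 / β := by
      rw [hβ]; field_simp
    have e2 := mul_le_mul_of_nonneg_right hp (by positivity : 0 ≤ lam * N * η)
    rw [e1] at e2
    have e3 : (q:ℝ) ≤ (1 + l) / β := by
      rw [add_div]
      have : 1 ≤ 1 / β := by rw [le_div_iff₀ hβ0]; linarith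
      linarith
    calc (q:ℝ) * (l + Real.log (1 / η)) ≤ (1 + l) / β * ((1 + Real.log (1 / η)) * (1 + l)) := by
          gcongr
          nlinarith [mul_nonneg hlη hl0']
      _ = (1 + Real.log (1 / η)) * (1 + l) ^ 2 / β := by ring
      _ ≤ p * (lam * N * η) := e2
      _ = η * X := by rw [hX]; ring
  set t := ε / 2 with ht
  have ht0 : 0 < t := by positivity
  have hmain := main_ind G p t (lam * η) β (lam * N) hp0.le hp1 ht0.le (by positivity)
    (by nlinarith) hβ1 hdeg _ Finset.univ rfl q ∅ (by simp) hqK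
  have hexp1 : Real.exp t ≤ 1 + t + t ^ 2 := by
    have := Real.abs_exp_sub_one_sub_id_le (x := t) (by rw [abs_of_pos ht0, ht]; linarith)
    have := (abs_le.1 this).2
    linarith
  have hexp2 : Real.exp t ≤ 2 := by
    have : t ≤ 1 / 2 := by rw [ht]; linarith
    nlinarith
  refine (bern_le p hp0.le hp1 _
    (fun ω => Real.exp (-(t * ((1 + ε) * X))) * Real.exp (t * indA G Finset.univ ω))
    (fun ω => by positivity) ?_).trans ?_
  · intro ω hω
    rw [← Real.exp_add]
    apply Real.one_le_exp
    have h1 : alphaSub G ω ≤ indA G Finset.univ ω := by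
      unfold alphaSub
      refine csSup_le' ?_
      rintro m ⟨S, hS1, hS2, rfl⟩
      exact le_indA G (Finset.subset_univ _) hS1 hS2
    have h2 : (alphaSub G ω : ℝ) ≤ indA G Finset.univ ω := by exact_mod_cast h1
    have h3 : (1 + ε) * X ≤ indA G Finset.univ ω := by
      refine le_trans ?_ h2
      have h4 : (1 + ε) * lam * p * N ≤ alphaSub G ω := hω
      calc (1 + ε) * X = (1 + ε) * lam * p * N := by rw [hX]; ring
        _ ≤ _ := h4
    have := mul_le_mul_of_nonneg_left h3 ht0.le
    linarith
  · apply ENNReal.ofReal_le_ofReal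
    simp only [Finset.prod_empty, mul_one, Finset.card_empty, pow_zero, one_mul] at hmain
    calc ∑ ω : V → Bool, bw p ω *
          (Real.exp (-(t * ((1 + ε) * X))) * Real.exp (t * indA G Finset.univ ω))
        = Real.exp (-(t * ((1 + ε) * X))) *
            ∑ ω : V → Bool, bw p ω * Real.exp (t * indA G Finset.univ ω) := by
          rw [Finset.mul_sum]; exact Finset.sum_congr rfl fun ω _ => by ring
      _ ≤ Real.exp (-(t * ((1 + ε) * X))) * (Real.exp (p * (Real.exp t - 1) * (lam * N)) *
            (1 / (lam * η)) ^ q * (1 + p * Real.exp t * (lam * η)) ^ (Finset.univ : Finset V).card) := by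
          gcongr
      _ ≤ Real.exp (-(t * ((1 + ε) * X))) * (Real.exp (p * (Real.exp t - 1) * (lam * N)) *
            Real.exp (q * (l + Real.log (1 / η))) * Real.exp (Real.exp t * η * X)) := by
          gcongr
          · apply le_of_eq
            rw [Real.exp_nat_mul, hl, Real.exp_add, Real.exp_log (by positivity),
              Real.exp_log (by positivity)]
            congr 1
            field_simp
          · calc (1 + p * Real.exp t * (lam * η)) ^ (Finset.univ : Finset V).card
                ≤ (Real.exp (p * Real.exp t * (lam * η))) ^ (Finset.univ : Finset V).card := by
                  gcongr
                  linarith [Real.add_one_le_exp (p * Real.exp t * (lam * η))]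
              _ = Real.exp (Real.exp t * η * X) := by
                  rw [← Real.exp_nat_mul, Finset.card_univ, ← hNdef, hX]
                  ring_nf
      _ ≤ _ := by
          rw [← Real.exp_add, ← Real.exp_add, ← Real.exp_add]
          apply Real.exp_le_exp.2
          have a1 : p * (Real.exp t - 1) * (lam * N) ≤ (t + t ^ 2) * X := by
            calc p * (Real.exp t - 1) * (lam * N) = (Real.exp t - 1) * X := by rw [hX]; ring
              _ ≤ _ := by gcongr; linarith
          have a2 : Real.exp t * η * X ≤ 2 * η * X := by gcongr
          have a3 : -(ε ^ 2 * p * lam * N) / 24 = - (ε ^ 2 * X) / 24 := by rw [hX]; ring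
          rw [a3]
          have a4 : 0 ≤ ε ^ 2 * X := by positivity
          have a5 : -(t * ((1 + ε) * X)) + ((t + t ^ 2) * X + η * X + 2 * η * X)
              = - (ε ^ 2 * X) / 10 := by rw [ht, hη]; ring
          linarith
end

section
/- Let G be a graph on N vertices, let γ > 0, and let 0 < ℓ < t be integers. Then there exist functions f_1, …, f_ℓ, where f_i assigns to each i-tuple of vertices of G a subset of V(G), such that for every independent set I of G with |I| ≥ t there is a sequence of distinct vertices x_1, …, x_ℓ ∈ I with the sets X_i = f_i(x_1,…,x_i) satisfying: (a) X_1 ⊇ X_2 ⊇ … ⊇ X_ℓ; (b) x_1, …, x_i ∉ X_i for all i ≤ ℓ; (c) I \ {x_1,…,x_i} ⊆ X_i for all i ≤ ℓ; and moreover either (i) |X_i| ≤ (1 − 2γ·e(G)/N²)·|X_{i−1}| for all 1 ≤ i ≤ ℓ (where X_0 = V(G)), or (ii) e(G[X_i]) < γ·(|X_i|²/N²)·e(G) for some 1 ≤ i ≤ ℓ. -/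
open MeasureTheory Filter Finset

open Classical in
/-- Number of neighbours of `x` inside `S`. -/
noncomputable def degIn {V : Type*} (G : SimpleGraph V) (S : Finset V) (x : V) : ℕ :=
  (S.filter (fun y => G.Adj x y)).card

lemma two_eCount {V : Type*} [Fintype V] (G : SimpleGraph V) (S : Finset V) :
    2 * eCount G S = ∑ y ∈ S, degIn G S y := by
  classical
  have h := (G.induce (S : Set V)).sum_degrees_eq_twice_card_edges
  have h1 : eCount G S = (G.induce (S : Set V)).edgeFinset.card := by
    unfold eCount
    rw [Nat.card_eq_fintype_card, SimpleGraph.edgeFinset_card]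
  rw [h1, ← h, ← Finset.sum_coe_sort S]
  refine Finset.sum_congr rfl fun y _ => ?_
  unfold degIn
  rw [← SimpleGraph.card_neighborFinset_eq_degree]
  refine Finset.card_bij (fun a _ => a.1) ?_ ?_ ?_
  · intro a ha
    simp only [SimpleGraph.mem_neighborFinset, SimpleGraph.comap_adj] at ha
    simp only [Finset.mem_filter]
    exact ⟨a.2, ha⟩
  · intro a _ b _ h
    exact Subtype.ext h
  · intro b hb
    simp only [Finset.mem_filter] at hb
    refine ⟨⟨b, hb.1⟩, ?_, rfl⟩
    simp only [SimpleGraph.mem_neighborFinset, SimpleGraph.comap_adj]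
    exact hb.2

/-- Existence of a max-degree ordering of `A`; `W x` is the final segment starting at `x`. -/
lemma exists_order {V : Type*} [DecidableEq V] (G : SimpleGraph V) (A : Finset V) :
    ∃ W : V → Finset V, ∀ J ⊆ A, J.Nonempty →
      ∃ x ∈ J, J ⊆ W x ∧ W x ⊆ A ∧ ∀ y ∈ W x, degIn G (W x) y ≤ degIn G (W x) x := by
  induction A using Finset.strongInduction with
  | H A ih =>
    rcases A.eq_empty_or_nonempty with rfl | hA
    · refine ⟨fun _ => ∅, fun J hJ hne => ?_⟩
      rw [Finset.subset_empty.1 hJ] at hne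
      simp at hne
    · obtain ⟨v, hv, hmax⟩ := Finset.exists_max_image A (degIn G A) hA
      obtain ⟨W, hW⟩ := ih (A.erase v) (Finset.erase_ssubset hv)
      refine ⟨Function.update W v A, fun J hJ hne => ?_⟩
      by_cases hvJ : v ∈ J
      · refine ⟨v, hvJ, ?_⟩
        simp only [Function.update_self]
        exact ⟨hJ, Finset.Subset.refl _, hmax⟩
      · obtain ⟨x, hx, h1, h2, h3⟩ := hW J (Finset.subset_erase.2 ⟨hJ, hvJ⟩) hne
        have hxv : x ≠ v := fun h => hvJ (h ▸ hx)
        refine ⟨x, hx, ?_⟩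
        rw [Function.update_of_ne hxv]
        exact ⟨h1, h2.trans (Finset.erase_subset _ _), h3⟩

lemma degIn_mono {V : Type*} (G : SimpleGraph V) {S T : Finset V} (h : S ⊆ T) (x : V) :
    degIn G S x ≤ degIn G T x := by
  classical
  exact Finset.card_le_card (Finset.filter_subset_filter _ h)

lemma degIn_lt {V : Type*} (G : SimpleGraph V) {S : Finset V} {x : V} (h : x ∈ S) :
    degIn G S x < S.card := by
  classical
  refine Finset.card_lt_card ⟨Finset.filter_subset _ _, fun hs => ?_⟩
  have := hs h
  simp at this

/-- One step of the algorithm. -/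
lemma one_step {V : Type*} [Fintype V] [DecidableEq V] (G : SimpleGraph V) (β : ℝ)
    (A : Finset V) :
    ∃ g : V → Finset V, ∀ J ⊆ A, IsIndep G J → 2 ≤ J.card →
      ∃ x ∈ J, g x ⊆ A ∧ x ∉ g x ∧ J.erase x ⊆ g x ∧
        (((g x).card : ℝ) ≤ (1 - β) * A.card ∨
          2 * (eCount G (g x) : ℝ) < β * ((g x).card : ℝ) ^ 2) := by
  classical
  obtain ⟨W, hW⟩ := exists_order G A
  let Y : V → Finset V := fun x => ((W x).erase x).filter (fun y => ¬ G.Adj x y)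
  refine ⟨fun x => if ((Y x).card : ℝ) ≤ (1 - β) * A.card then Y x else (W x).erase x, ?_⟩
  intro J hJ hind hcard
  obtain ⟨x, hx, h1, h2, h3⟩ := hW J hJ (Finset.card_pos.1 (by omega))
  refine ⟨x, hx, ?_⟩
  have hsub : J.erase x ⊆ (W x).erase x := Finset.erase_subset_erase _ h1
  dsimp only
  split_ifs with hc
  · refine ⟨((Finset.filter_subset _ _).trans (Finset.erase_subset _ _)).trans h2, ?_, ?_,
      Or.inl hc⟩
    · simp [Y]
    · intro y hy
      exact Finset.mem_filter.2 ⟨hsub hy, hind x hx y (Finset.mem_of_mem_erase hy)⟩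
  · refine ⟨(Finset.erase_subset _ _).trans h2, by simp, hsub, Or.inr ?_⟩
    have hxW : x ∈ W x := h1 hx
    set S := (W x).erase x with hS
    have hw : (S.card : ℝ) + 1 = (W x).card := by
      exact_mod_cast Finset.card_erase_add_one hxW
    have hspos : 0 < S.card := by
      have := Finset.card_le_card hsub
      rw [Finset.card_erase_of_mem hx] at this
      omega
    have hY : (Y x).card + degIn G (W x) x = S.card := by
      have e := Finset.card_filter_add_card_filter_not (s := S) (fun y => G.Adj x y)
      have e2 : (W x).filter (fun y => G.Adj x y) = S.filter (fun y => G.Adj x y) := by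
        ext y
        simp only [hS, Finset.mem_filter, Finset.mem_erase]
        constructor
        · rintro ⟨a, b⟩
          exact ⟨⟨b.ne.symm, a⟩, b⟩
        · rintro ⟨⟨_, a⟩, b⟩
          exact ⟨a, b⟩
      have e3 : degIn G (W x) x = (S.filter (fun y => G.Adj x y)).card := by
        unfold degIn
        convert congrArg Finset.card e2
      have e4 : Y x = S.filter (fun y => ¬ G.Adj x y) := rfl
      rw [e3, e4]
      omega
    have hY' : ((Y x).card : ℝ) + degIn G (W x) x = S.card := by exact_mod_cast hY
    have hdeg : ∀ y ∈ S, (degIn G S y : ℝ) < β * S.card := by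
      intro y hy
      have hsR : (0 : ℝ) < S.card := by exact_mod_cast hspos
      rcases le_or_gt β 1 with hb | hb
      · have a1 : (degIn G S y : ℝ) ≤ degIn G (W x) x := by
          exact_mod_cast (degIn_mono G (Finset.erase_subset _ _) y).trans
            (h3 y (Finset.mem_of_mem_erase hy))
        have a2 : ((W x).card : ℝ) ≤ A.card := by exact_mod_cast Finset.card_le_card h2
        have a3 : (1 - β) * ((W x).card : ℝ) ≤ (1 - β) * A.card :=
          mul_le_mul_of_nonneg_left a2 (by linarith)
        rw [← hw] at a3
        push Not at hc
        nlinarith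
      · have a1 : (degIn G S y : ℝ) < S.card := by exact_mod_cast degIn_lt G hy
        nlinarith
    have hsum : (2 : ℝ) * eCount G S = ∑ y ∈ S, (degIn G S y : ℝ) := by
      exact_mod_cast two_eCount G S
    rw [hsum]
    calc ∑ y ∈ S, (degIn G S y : ℝ) < ∑ _y ∈ S, β * (S.card : ℝ) :=
          Finset.sum_lt_sum_of_nonempty (Finset.card_pos.1 hspos) hdeg
      _ = β * (S.card : ℝ) ^ 2 := by
          rw [Finset.sum_const, nsmul_eq_mul]
          ring

/-- the greedy algorithm lemma. The functions `f_1, …, f_ℓ` are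
packaged as a single function `f` on lists of vertices: `X_i = f [x_1, …, x_i]`
depends only on `x_1, …, x_i`. -/
theorem greedy_algorithm {V : Type*} [Fintype V] [DecidableEq V]
    (G : SimpleGraph V) (γ : ℝ) (hγ : 0 < γ) (ℓ t : ℕ) (hℓ : 0 < ℓ) (hℓt : ℓ < t) :
    ∃ f : List V → Finset V,
      ∀ I : Finset V, IsIndep G I → t ≤ I.card →
        ∃ x : ℕ → V,
          (∀ i, 1 ≤ i → i ≤ ℓ → x i ∈ I) ∧
          (∀ i j, 1 ≤ i → i < j → j ≤ ℓ → x i ≠ x j) ∧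
          (let X : ℕ → Finset V := fun i =>
            if i = 0 then Finset.univ else f ((List.range i).map fun j => x (j + 1))
           -- (a) the sets are nested
           (∀ i j, i ≤ j → j ≤ ℓ → X j ⊆ X i) ∧
           -- (b) `x_1, …, x_i ∉ X_i`
           (∀ i, i ≤ ℓ → ∀ j, 1 ≤ j → j ≤ i → x j ∉ X i) ∧
           -- (c) `I \ {x_1, …, x_i} ⊆ X_i`
           (∀ i, i ≤ ℓ → ∀ v ∈ I, (∀ j, 1 ≤ j → j ≤ i → v ≠ x j) → v ∈ X i) ∧
           -- moreover, (i) or (ii)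
           ((∀ i, 1 ≤ i → i ≤ ℓ →
              ((X i).card : ℝ) ≤ (1 - 2 * γ * (eTotal G : ℝ) / (Fintype.card V : ℝ) ^ 2) *
                ((X (i - 1)).card : ℝ)) ∨
            (∃ i, 1 ≤ i ∧ i ≤ ℓ ∧
              (eCount G (X i) : ℝ) <
                γ * ((X i).card : ℝ) ^ 2 / (Fintype.card V : ℝ) ^ 2 * (eTotal G : ℝ)))) := by
  classical
  set β : ℝ := 2 * γ * (eTotal G : ℝ) / (Fintype.card V : ℝ) ^ 2 with hβ
  choose g hg using one_step G β
  refine ⟨fun L => L.foldl g Finset.univ, fun I hI hIt => ?_⟩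
  have hne : Nonempty V := by
    obtain ⟨v, _⟩ := Finset.card_pos.1 (show 0 < I.card by omega)
    exact ⟨v⟩
  have hpick : ∀ A J : Finset V, ∃ x : V, J ⊆ A → IsIndep G J → 2 ≤ J.card →
      x ∈ J ∧ g A x ⊆ A ∧ x ∉ g A x ∧ J.erase x ⊆ g A x ∧
        (((g A x).card : ℝ) ≤ (1 - β) * A.card ∨
          2 * (eCount G (g A x) : ℝ) < β * ((g A x).card : ℝ) ^ 2) := by
    intro A J
    by_cases h : J ⊆ A ∧ IsIndep G J ∧ 2 ≤ J.card
    · obtain ⟨x, hx, hr⟩ := hg A J h.1 h.2.1 h.2.2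
      exact ⟨x, fun _ _ _ => ⟨hx, hr⟩⟩
    · exact ⟨hne.some, fun a b c => absurd ⟨a, b, c⟩ h⟩
  choose h hh using hpick
  let s : ℕ → Finset V × Finset V := fun n => Nat.rec (Finset.univ, I)
    (fun _ p => (g p.1 (h p.1 p.2), p.2.erase (h p.1 p.2))) n
  let x : ℕ → V := fun n => h (s (n - 1)).1 (s (n - 1)).2
  have s0 : s 0 = (Finset.univ, I) := rfl
  have s1 : ∀ n, (s (n + 1)).1 = g (s n).1 (x (n + 1)) := fun n => rfl
  have s2 : ∀ n, (s (n + 1)).2 = (s n).2.erase (x (n + 1)) := fun n => rfl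
  have hX : ∀ i, (if i = 0 then Finset.univ else
      ((List.range i).map fun j => x (j + 1)).foldl g Finset.univ) = (s i).1 := by
    intro i
    have : ((List.range i).map fun j => x (j + 1)).foldl g Finset.univ = (s i).1 := by
      induction i with
      | zero => rfl
      | succ n ih =>
        rw [List.range_succ, List.map_append, List.foldl_append, ih, s1]
        rfl
    split_ifs with h0
    · rw [h0, s0]
    · exact this
  have inv : ∀ n, n ≤ ℓ → (s n).2 ⊆ (s n).1 ∧ (s n).2 ⊆ I ∧ (s n).2.card + n = I.card := by
    intro n
    induction n with
    | zero =>
      intro _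
      rw [s0]
      simp
    | succ n ih =>
      intro hn
      obtain ⟨a, b, c⟩ := ih (by omega)
      obtain ⟨p1, p2, p3, p4, p5⟩ := hh (s n).1 (s n).2 a
        (fun u hu v hv => hI u (b hu) v (b hv)) (by omega)
      refine ⟨p4, ?_, ?_⟩
      · rw [s2]
        exact (Finset.erase_subset _ _).trans b
      · rw [s2]
        have := Finset.card_erase_add_one (s := (s n).2) (a := x (n + 1)) p1
        omega
  have step : ∀ n, n < ℓ → x (n + 1) ∈ (s n).2 ∧ (s (n + 1)).1 ⊆ (s n).1 ∧
      x (n + 1) ∉ (s (n + 1)).1 ∧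
        (((s (n + 1)).1.card : ℝ) ≤ (1 - β) * (s n).1.card ∨
          2 * (eCount G (s (n + 1)).1 : ℝ) < β * ((s (n + 1)).1.card : ℝ) ^ 2) := by
    intro n hn
    obtain ⟨a, b, c⟩ := inv n hn.le
    obtain ⟨p1, p2, p3, p4, p5⟩ := hh (s n).1 (s n).2 a
        (fun u hu v hv => hI u (b hu) v (b hv)) (by omega)
    exact ⟨p1, p2, p3, p5⟩
  have nest : ∀ i j, i ≤ j → j ≤ ℓ → (s j).1 ⊆ (s i).1 := by
    intro i j hij
    induction j, hij using Nat.le_induction with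
    | base => exact fun _ => Finset.Subset.refl _
    | succ j hij ih => exact fun hj => (step j hj).2.1.trans (ih (by omega))
  have notmem : ∀ i, i ≤ ℓ → ∀ j, 1 ≤ j → j ≤ i → x j ∉ (s i).1 := by
    intro i hi j hj hji hmem
    obtain ⟨k, rfl⟩ : ∃ k, j = k + 1 := ⟨j - 1, by omega⟩
    exact (step k (by omega)).2.2.1 (nest _ _ hji hi hmem)
  have memJ : ∀ i, ∀ v ∈ I, (∀ j, 1 ≤ j → j ≤ i → v ≠ x j) → v ∈ (s i).2 := by
    intro i v hv
    induction i with
    | zero => exact fun _ => hv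
    | succ n ih =>
      intro hj
      rw [s2]
      exact Finset.mem_erase.2 ⟨hj _ (by omega) le_rfl,
        ih fun j a b => hj j a (by omega)⟩
  refine ⟨x, ?_, ?_, ?_⟩
  · intro i hi hil
    obtain ⟨k, rfl⟩ : ∃ k, i = k + 1 := ⟨i - 1, by omega⟩
    exact (inv k (by omega)).2.1 (step k (by omega)).1
  · intro i j hi hij hj heq
    obtain ⟨k, rfl⟩ : ∃ k, j = k + 1 := ⟨j - 1, by omega⟩
    refine notmem k (by omega) i hi (by omega) ?_
    rw [heq]
    exact (inv k (by omega)).1 (step k (by omega)).1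
  · simp only [hX]
    refine ⟨nest, notmem, fun i hi v hv hj => (inv i hi).1 (memJ i v hv hj), ?_⟩
    by_contra hcon
    push Not at hcon
    obtain ⟨⟨i, hi, hil, hlt⟩, hall⟩ := hcon
    have hE := hall i hi hil
    obtain ⟨k, rfl⟩ : ∃ k, i = k + 1 := ⟨i - 1, by omega⟩
    rcases (step k (by omega)).2.2.2 with h1 | h1
    · exact absurd h1 (not_le.2 hlt)
    · have : β * ((s (k + 1)).1.card : ℝ) ^ 2 = 2 * (γ * ((s (k + 1)).1.card : ℝ) ^ 2 /
          (Fintype.card V : ℝ) ^ 2 * (eTotal G : ℝ)) := by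
        rw [hβ]
        ring
      linarith
end

section
/- Let λ, γ ∈ (0,1], let G be a (λ,γ)-supersaturated graph on N vertices with average degree D, let t ≥ 1 and 0 < ℓ < t be integers, and set ν = max{ (1 − γ·D/N)^{ℓ}, λ }. Then there exists a function P assigning to each ℓ-element set of vertices a subset of V(G) with |P(L)| ≤ ν·N, such that for every independent set I of G with |I| = t there exists L ⊆ I with |L| = ℓ, I \ L ⊆ P(L), and L ∩ P(L) = ∅. -/
open MeasureTheory Filter Finset

/-- Kleitman–Winston algorithm, by induction on the set of available vertices. -/
lemma kw_aux {V : Type*} [DecidableEq V] (G : SimpleGraph V) [DecidableRel G.Adj]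
    (q M : ℝ) (hq : 0 ≤ q)
    (H : ∀ A : Finset V, A.Nonempty → M ≤ A.card →
      ∃ v ∈ A, (1 - q) * A.card ≤ ((A.filter (G.Adj v)).card : ℝ)) :
    ∀ n : ℕ, ∀ A : Finset V, A.card = n → ∀ k : ℕ,
    ∃ P : Finset V → Finset V, (∀ L, P L ⊆ A) ∧
      (∀ L, ((P L).card : ℝ) ≤ max (q ^ k * A.card) M) ∧
      ∀ I : Finset V, I ⊆ A → IsIndep G I → k ≤ I.card →
        ∃ L : Finset V, L ⊆ I ∧ L.card = k ∧ I \ L ⊆ P L ∧ L ∩ P L = ∅ := by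
  intro n
  induction n using Nat.strong_induction_on with
  | _ n ih =>
  intro A hA k
  rcases k with _ | k
  · refine ⟨fun _ => A, fun _ => Subset.rfl, fun _ => by simp, fun I hI _ _ => ?_⟩
    exact ⟨∅, by simp, by simp, by simpa using hI, by simp⟩
  rcases A.eq_empty_or_nonempty with rfl | hne
  · refine ⟨fun _ => ∅, fun _ => Subset.rfl, fun _ => by simp, fun I hI _ hc => ?_⟩
    have : I = ∅ := by simpa using hI
    subst this
    simp at hc
  have hv : ∃ v ∈ A, M ≤ A.card → (1 - q) * A.card ≤ ((A.filter (G.Adj v)).card : ℝ) := by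
    by_cases h : M ≤ A.card
    · obtain ⟨v, h1, h2⟩ := H A hne h
      exact ⟨v, h1, fun _ => h2⟩
    · obtain ⟨v, h1⟩ := hne
      exact ⟨v, h1, fun h' => absurd h' h⟩
  obtain ⟨v, hvA, hdeg⟩ := hv
  have hlt1 : (A.erase v).card < n := hA ▸ card_erase_lt_of_mem hvA
  set A2 := (A.erase v).filter (fun w => ¬ G.Adj v w) with hA2
  have hA2le : A2.card ≤ (A.erase v).card := card_filter_le _ _
  obtain ⟨P1, s1, b1, f1⟩ := ih _ hlt1 (A.erase v) rfl (k + 1)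
  obtain ⟨P2, s2, b2, f2⟩ := ih _ (lt_of_le_of_lt hA2le hlt1) A2 rfl k
  have hA2A : A2 ⊆ A := (filter_subset _ _).trans (erase_subset _ _)
  refine ⟨fun L => if v ∈ L then P2 (L.erase v) else P1 L, ?_, ?_, ?_⟩
  · intro L
    dsimp only
    split_ifs
    · exact (s2 _).trans hA2A
    · exact (s1 _).trans (erase_subset _ _)
  · intro L
    dsimp only
    split_ifs
    · by_cases h : M ≤ A.card
      · refine (b2 _).trans (max_le_max ?_ le_rfl)
        have e1 : A2.card + (A.filter (G.Adj v)).card ≤ A.card := by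
          have h1 : A2.card ≤ (A.filter (fun w => ¬ G.Adj v w)).card :=
            card_le_card (filter_subset_filter _ (erase_subset _ _))
          have h2 := card_filter_add_card_filter_not (s := A) (G.Adj v)
          omega
        have e2 : (A2.card : ℝ) + (A.filter (G.Adj v)).card ≤ A.card := by exact_mod_cast e1
        have e3 := hdeg h
        have : (A2.card : ℝ) ≤ q * A.card := by linarith
        calc q ^ k * (A2.card : ℝ) ≤ q ^ k * (q * A.card) := by gcongr
          _ = _ := by ring
      · push Not at h
        have : ((P2 (L.erase v)).card : ℝ) ≤ A.card := by
          exact_mod_cast card_le_card ((s2 _).trans hA2A)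
        exact (this.trans h.le).trans (le_max_right _ _)
    · refine (b1 _).trans (max_le_max ?_ le_rfl)
      gcongr
      exact erase_subset _ _
  · intro I hI hind hk
    by_cases hvI : v ∈ I
    · have hI2 : I.erase v ⊆ A2 := by
        intro w hw
        rw [mem_erase] at hw
        simp only [hA2, mem_filter, mem_erase]
        exact ⟨⟨hw.1, hI hw.2⟩, hind _ hvI _ hw.2⟩
      obtain ⟨L, l1, l2, l3, l4⟩ := f2 (I.erase v) hI2
        (fun a ha b hb => hind a (mem_of_mem_erase ha) b (mem_of_mem_erase hb))
        (by rw [card_erase_of_mem hvI]; omega)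
      have hvL : v ∉ L := fun h => by simpa using l1 h
      refine ⟨insert v L, ?_, ?_, ?_, ?_⟩
      · exact insert_subset hvI (l1.trans (erase_subset _ _))
      · rw [card_insert_of_notMem hvL, l2]
      · simp only [mem_insert_self, if_true, erase_insert hvL]
        refine Subset.trans ?_ l3
        intro w hw
        rw [Finset.mem_sdiff, Finset.mem_insert] at hw
        rw [Finset.mem_sdiff, Finset.mem_erase]
        tauto
      · simp only [mem_insert_self, if_true, erase_insert hvL]
        have : v ∉ P2 L := fun h => by
          have := s2 _ h
          simp [hA2] at this
        rw [insert_inter_of_notMem this, l4]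
    · obtain ⟨L, l1, l2, l3, l4⟩ := f1 I (subset_erase.2 ⟨hI, hvI⟩) hind hk
      have hvL : v ∉ L := fun h => hvI (l1 h)
      exact ⟨L, l1, l2, by simpa [hvL] using l3, by simpa [hvL] using l4⟩

/-- Some vertex of `A` has at least the average degree in `G[A]`. -/
lemma exists_deg_ge {V : Type*} [Fintype V] [DecidableEq V] (G : SimpleGraph V)
    [DecidableRel G.Adj] (A : Finset V) (hA : A.Nonempty) :
    ∃ v ∈ A, 2 * (eCount G A : ℝ) ≤ A.card * ((A.filter (G.Adj v)).card : ℝ) := by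
  classical
  have h1 : ∑ v ∈ A, (A.filter (G.Adj v)).card = 2 * eCount G A := by
    have h := (G.induce (A : Set V)).sum_degrees_eq_twice_card_edges
    have h2 : eCount G A = #(G.induce (A : Set V)).edgeFinset := by
      rw [eCount, Nat.card_eq_fintype_card, SimpleGraph.edgeFinset_card]
    rw [h2, ← h, ← Finset.sum_coe_sort]
    refine Finset.sum_congr rfl fun v _ => ?_
    rw [← SimpleGraph.card_neighborFinset_eq_degree]
    symm
    refine Finset.card_bij (fun w _ => w.1) ?_ ?_ ?_
    · intro w hw
      simpa using hw
    · intro a _ b _ hab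
      exact Subtype.ext hab
    · intro b hb
      simp only [mem_filter] at hb
      exact ⟨⟨b, hb.1⟩, by simpa using hb.2, rfl⟩
  obtain ⟨v, hv, hm⟩ := A.exists_max_image (fun v => (A.filter (G.Adj v)).card) hA
  refine ⟨v, hv, ?_⟩
  have := Finset.sum_le_card_nsmul A _ _ hm
  rw [h1, smul_eq_mul] at this
  exact_mod_cast this

/-- fingerprint corollary for supersaturated graphs. -/
theorem fingerprint_supersaturated {V : Type*} [Fintype V] [DecidableEq V]
    (lam gam : ℝ) (hlam : lam ∈ Set.Ioc (0 : ℝ) 1) (hgam : gam ∈ Set.Ioc (0 : ℝ) 1)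
    (G : SimpleGraph V) (hsat : Supersaturated G lam gam)
    (D : ℝ) (hD : D = 2 * (eTotal G : ℝ) / Fintype.card V)
    (t ℓ : ℕ) (ht : 1 ≤ t) (hℓ0 : 0 < ℓ) (hℓt : ℓ < t)
    (ν : ℝ) (hν : ν = max ((1 - gam * D / Fintype.card V) ^ ℓ) lam) :
    ∃ P : Finset V → Finset V,
      (∀ L : Finset V, L.card = ℓ → ((P L).card : ℝ) ≤ ν * Fintype.card V) ∧
      ∀ I : Finset V, IsIndep G I → I.card = t →
        ∃ L : Finset V, L ⊆ I ∧ L.card = ℓ ∧ I \ L ⊆ P L ∧ L ∩ P L = ∅ := by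
  classical
  obtain ⟨hl0, hl1⟩ := hlam
  rcases isEmpty_or_nonempty V with hV | hV
  · refine ⟨fun _ => ∅, fun L _ => by simp, fun I _ hc => ?_⟩
    have : I = ∅ := Finset.eq_empty_of_isEmpty I
    subst this
    simp at hc
    omega
  have hN : (0 : ℝ) < Fintype.card V := by exact_mod_cast Fintype.card_pos
  set N : ℝ := (Fintype.card V : ℝ) with hNdef
  have H : ∀ A : Finset V, A.Nonempty → lam * N ≤ A.card →
      ∃ v ∈ A, (1 - (1 - gam * D / N)) * A.card ≤ ((A.filter (G.Adj v)).card : ℝ) := by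
    intro A hA hc
    obtain ⟨v, hv, h⟩ := exists_deg_ge G A hA
    refine ⟨v, hv, ?_⟩
    have h2 := hsat A hc
    have hpos : (0 : ℝ) < A.card := by exact_mod_cast hA.card_pos
    refine le_of_mul_le_mul_left ?_ hpos
    refine le_trans (le_of_eq ?_) ((mul_le_mul_of_nonneg_left h2 zero_le_two).trans h)
    rw [hD]
    field_simp
    ring
  have hq : 0 ≤ 1 - gam * D / N := by
    obtain ⟨v, -, h⟩ := H univ univ_nonempty (by
      rw [card_univ, ← hNdef]; nlinarith)
    have h3 : (((univ : Finset V).filter (G.Adj v)).card : ℝ) ≤ N := by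
      rw [hNdef]; exact_mod_cast card_le_univ _
    rw [card_univ, ← hNdef] at h
    nlinarith
  obtain ⟨P, -, b, f⟩ := kw_aux G _ _ hq H _ univ rfl ℓ
  refine ⟨P, fun L _ => ?_, fun I hI hc => f I (subset_univ _) hI (by omega)⟩
  have := b L
  rw [card_univ, ← hNdef, ← max_mul_of_nonneg _ _ hN.le, ← hν] at this
  exact this
end

section
/- Let λ, γ ∈ (0,1], let G be a (λ,γ)-supersaturated graph on N vertices with average degree D, let t ≥ 1 and 0 < ℓ < t be integers, and set ν = max{ (1 − γ·D/N)^{ℓ}, λ }. Then the number of independent sets of G of size exactly t is at most C(N, ℓ) · C(⌊ν·N⌋, t − ℓ). -/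
open MeasureTheory Filter Finset

open scoped Classical in
theorem sum_deg_aux {V : Type*} [Fintype V] (G : SimpleGraph V) (A : Finset V) :
    ∑ v ∈ A, (A.filter fun w => G.Adj v w).card = 2 * eCount G A := by
  have h := (G.induce (A : Set V)).sum_degrees_eq_twice_card_edges
  have h2 : eCount G A = (G.induce (A : Set V)).edgeFinset.card := by
    unfold eCount
    rw [Nat.card_eq_fintype_card, SimpleGraph.edgeFinset_card]
  rw [h2, ← h]
  rw [← Finset.sum_coe_sort A]
  refine Finset.sum_congr rfl fun v _ => ?_
  rw [← SimpleGraph.card_neighborFinset_eq_degree]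
  symm
  refine Finset.card_bij (fun w _ => w.1) ?_ ?_ ?_
  · intro w hw
    have hw2 : w.1 ∈ A := w.2
    simp only [SimpleGraph.mem_neighborFinset, SimpleGraph.comap_adj] at hw
    exact Finset.mem_filter.mpr ⟨hw2, hw⟩
  · intro a _ b _ hab
    exact Subtype.ext hab
  · intro b hb
    rw [Finset.mem_filter] at hb
    exact ⟨⟨b, hb.1⟩, by simpa using hb.2, rfl⟩

open scoped Classical in
theorem count_aux {V : Type*} [Fintype V] (G : SimpleGraph V) (β L : ℝ) (M : ℕ)
    (hβ0 : 0 ≤ β) (hβ1 : β ≤ 1) (hL : L < M + 1)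
    (H : ∀ A : Finset V, A.Nonempty → L ≤ A.card →
      ∃ v ∈ A, β * A.card ≤ (A.filter fun w => G.Adj v w).card) :
    ∀ (n : ℕ) (A : Finset V), A.card = n → ∀ m s : ℕ, m ≤ s →
      (1 - β) ^ m * (A.card : ℝ) < M + 1 →
      ((A.powersetCard s).filter fun I => IsIndep G I).card ≤
        A.card.choose m * M.choose (s - m) := by
  intro n
  induction n using Nat.strong_induction_on with
  | _ n ih =>
  intro A hA m s hms hM
  rcases m with _ | m
  · have : A.card ≤ M := by
      have h : (A.card : ℝ) < (M + 1 : ℕ) := by push_cast; simpa using hM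
      exact Nat.lt_succ_iff.mp (by exact_mod_cast h)
    calc _ ≤ (A.powersetCard s).card := Finset.card_filter_le _ _
      _ = A.card.choose s := Finset.card_powersetCard _ _
      _ ≤ M.choose s := Nat.choose_le_choose _ this
      _ = _ := by simp
  obtain ⟨s, rfl⟩ : ∃ s', s = s' + 1 := ⟨s - 1, by omega⟩
  rcases A.eq_empty_or_nonempty with rfl | hne
  · simp
  have hv : ∃ v ∈ A, L ≤ A.card → β * A.card ≤ (A.filter fun w => G.Adj v w).card := by
    by_cases hc : L ≤ A.card
    · obtain ⟨v, hv, h⟩ := H A hne hc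
      exact ⟨v, hv, fun _ => h⟩
    · obtain ⟨v, hv⟩ := hne
      exact ⟨v, hv, fun h => absurd h hc⟩
  obtain ⟨v, hvA, hdeg⟩ := hv
  have hb0 : 0 ≤ 1 - β := by linarith
  have hb1 : 1 - β ≤ 1 := by linarith
  set B := A.erase v with hB
  set C := B.filter fun w => ¬ G.Adj v w with hC
  have hBc : B.card + 1 = A.card := Finset.card_erase_add_one hvA
  have hCB : C.card ≤ B.card := Finset.card_filter_le _ _
  have hCA : C.card + (A.filter fun w => G.Adj v w).card ≤ A.card := by
    rw [← Finset.card_union_of_disjoint]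
    · apply Finset.card_le_card
      intro x hx
      simp only [hC, hB, Finset.mem_union, Finset.mem_filter, Finset.mem_erase] at hx
      tauto
    · rw [Finset.disjoint_left]
      intro x hx hx2
      simp only [hC, Finset.mem_filter] at hx hx2
      exact hx.2 hx2.2
  have hCM : (1 - β) ^ m * (C.card : ℝ) < M + 1 := by
    by_cases hc : L ≤ A.card
    · have h1 := hdeg hc
      have h2 : (C.card : ℝ) + (A.filter fun w => G.Adj v w).card ≤ A.card := by
        exact_mod_cast hCA
      have h3 : (C.card : ℝ) ≤ (1 - β) * A.card := by linarith
      calc _ ≤ (1 - β) ^ m * ((1 - β) * A.card) := by gcongr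
        _ = (1 - β) ^ (m + 1) * A.card := by ring
        _ < _ := hM
    · have h2 : (C.card : ℝ) ≤ A.card := by exact_mod_cast (by omega : C.card ≤ A.card)
      have h3 : (1 - β) ^ m * (C.card : ℝ) ≤ 1 * C.card := by
        gcongr
        exact pow_le_one₀ hb0 hb1
      push Not at hc
      linarith
  have hBM : (1 - β) ^ (m + 1) * (B.card : ℝ) < M + 1 := by
    refine lt_of_le_of_lt ?_ hM
    have h5 : (B.card : ℝ) ≤ A.card := by exact_mod_cast (by omega : B.card ≤ A.card)
    exact mul_le_mul_of_nonneg_left h5 (pow_nonneg hb0 _)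
  have i1 := ih B.card (by omega) B rfl (m + 1) (s + 1) hms hBM
  have i2 := ih C.card (by omega) C rfl m s (by omega) hCM
  have hsub : ((A.powersetCard (s + 1)).filter fun I => IsIndep G I) ⊆
      ((B.powersetCard (s + 1)).filter fun I => IsIndep G I) ∪
      ((C.powersetCard s).filter fun I => IsIndep G I).image (insert v) := by
    intro I hI
    simp only [Finset.mem_filter, Finset.mem_powersetCard] at hI
    obtain ⟨⟨hIA, hIc⟩, hI⟩ := hI
    rw [Finset.mem_union]
    by_cases hvI : v ∈ I
    · right
      rw [Finset.mem_image]
      refine ⟨I.erase v, ?_, Finset.insert_erase hvI⟩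
      simp only [Finset.mem_filter, Finset.mem_powersetCard]
      refine ⟨⟨?_, ?_⟩, ?_⟩
      · intro x hx
        rw [Finset.mem_erase] at hx
        simp only [hC, hB, Finset.mem_filter, Finset.mem_erase]
        exact ⟨⟨hx.1, hIA hx.2⟩, hI v hvI x hx.2⟩
      · rw [Finset.card_erase_of_mem hvI]; omega
      · intro a ha b hb
        exact hI a (Finset.mem_of_mem_erase ha) b (Finset.mem_of_mem_erase hb)
    · left
      simp only [Finset.mem_filter, Finset.mem_powersetCard]
      refine ⟨⟨?_, hIc⟩, hI⟩
      intro x hx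
      rw [hB, Finset.mem_erase]
      exact ⟨fun h => hvI (h ▸ hx), hIA hx⟩
  have hss : s + 1 - (m + 1) = s - m := by omega
  rw [hss] at i1 ⊢
  calc _ ≤ _ := Finset.card_le_card hsub
    _ ≤ _ := Finset.card_union_le _ _
    _ ≤ B.card.choose (m + 1) * M.choose (s - m) + B.card.choose m * M.choose (s - m) := by
        refine Nat.add_le_add i1 (Finset.card_image_le.trans (i2.trans ?_))
        exact Nat.mul_le_mul_right _ (Nat.choose_le_choose _ hCB)
    _ = _ := by rw [← hBc, Nat.choose_succ_succ']; ring

open scoped Classical in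
/-- counting independent sets of a supersaturated graph. -/
theorem count_independent_sets {V : Type*} [Fintype V]
    (lam gam : ℝ) (hlam : lam ∈ Set.Ioc (0 : ℝ) 1) (hgam : gam ∈ Set.Ioc (0 : ℝ) 1)
    (G : SimpleGraph V) (hsat : Supersaturated G lam gam)
    (D : ℝ) (hD : D = 2 * (eTotal G : ℝ) / Fintype.card V)
    (t ℓ : ℕ) (ht : 1 ≤ t) (hℓ0 : 0 < ℓ) (hℓt : ℓ < t)
    (ν : ℝ) (hν : ν = max ((1 - gam * D / Fintype.card V) ^ ℓ) lam) :
    ((Finset.univ : Finset (Finset V)).filter fun I => IsIndep G I ∧ I.card = t).card ≤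
      (Fintype.card V).choose ℓ * (⌊ν * Fintype.card V⌋₊).choose (t - ℓ) := by
  obtain ⟨hl0, hl1⟩ := hlam
  obtain ⟨hg0, hg1⟩ := hgam
  rcases isEmpty_or_nonempty V with hV | hV
  · have : ((Finset.univ : Finset (Finset V)).filter fun I => IsIndep G I ∧ I.card = t) = ∅ := by
      apply Finset.filter_eq_empty_iff.mpr
      intro I _ h
      have h2 := h.2
      rw [Finset.eq_empty_of_isEmpty I, Finset.card_empty] at h2
      omega
    rw [this]
    simp
  have hN : (0 : ℝ) < Fintype.card V := by exact_mod_cast Fintype.card_pos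
  set N : ℝ := (Fintype.card V : ℝ) with hNdef
  set β := gam * D / N with hβ
  have hD0 : 0 ≤ D := by rw [hD]; positivity
  have hβ0 : 0 ≤ β := by positivity
  have H : ∀ A : Finset V, A.Nonempty → lam * N ≤ A.card →
      ∃ v ∈ A, β * A.card ≤ (A.filter fun w => G.Adj v w).card := by
    intro A hne hA
    apply Finset.exists_le_of_sum_le hne
    have h1 := hsat A hA
    have h2 : (∑ v ∈ A, ((A.filter fun w => G.Adj v w).card : ℝ)) = 2 * eCount G A := by
      exact_mod_cast sum_deg_aux G A
    rw [h2, Finset.sum_const, nsmul_eq_mul]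
    calc (A.card : ℝ) * (β * A.card)
        = 2 * (gam * ((A.card : ℝ) / N) ^ 2 * eTotal G) := by
          rw [hβ, hD]; field_simp
      _ ≤ _ := by linarith
  have hβ1 : β ≤ 1 := by
    obtain ⟨v, _, hv⟩ := H Finset.univ Finset.univ_nonempty (by
      rw [Finset.card_univ]; nlinarith)
    have h3 : (((Finset.univ : Finset V).filter fun w => G.Adj v w).card : ℝ) ≤ N := by
      rw [hNdef, ← Finset.card_univ]
      exact_mod_cast Finset.card_filter_le _ _
    rw [Finset.card_univ] at hv
    have h4 : β * N ≤ 1 * N := by linarith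
    exact le_of_mul_le_mul_right h4 hN
  have hfl := Nat.lt_floor_add_one (ν * N)
  have key := count_aux G β (lam * N) ⌊ν * N⌋₊ hβ0 hβ1
    (lt_of_le_of_lt (mul_le_mul_of_nonneg_right (hν ▸ le_max_right _ _) hN.le) hfl) H
    _ Finset.univ rfl ℓ t hℓt.le (by
      rw [Finset.card_univ]
      exact lt_of_le_of_lt (mul_le_mul_of_nonneg_right (hν ▸ le_max_left _ _) hN.le) hfl)
  rw [Finset.card_univ] at key
  refine le_trans (Finset.card_le_card ?_) key
  intro I hI
  simp only [Finset.mem_filter, Finset.mem_powersetCard, Finset.mem_univ, true_and] at hI ⊢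
  exact ⟨⟨Finset.subset_univ _, hI.2⟩, hI.1⟩
end
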